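/- arXiv:1602.08643 — 3 statements merged into one kernel-verified Lean document; each statement's English description precedes it below -/
import Mathlib

section
/- The thermodynamic limit G_∞(A) of the defect-formation free energy admits the representation G_∞(A) = −log( (∫_ℝ exp(−P(y) − ψ(y) − E^cg(A,y)) dy) / (∫_ℝ exp(−ψ(y) − E^cg(A,y)) dy) ), where E^cg(A,y) = W'(A)·(A − y). -/
/-!
The partition function of the chain is an `N`-fold convolution of bond weights evaluated at `N A`:
all factors are `exp (-ψ)`, except that the defect replaces the first one by `exp (-ψ - P)`
(`chainZ_succ`, `chainZ_eq_conv`). Thus both partition functions are integrals over the length `y`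
of the first bond, weighted by the same `(N-1)`-fold convolution power of `exp (-ψ)` at `N A - y`.

Put `Λ σ = log ∫ exp (-ψ y + σ y) dy`. Then `Λ'` is a strictly increasing bijection of `ℝ`, so the
Legendre transform `W` of `Λ` is differentiable, and `σ = W'(A)` is the tilt for which the normalised
weight `exp (-ψ y + σ y)` has mean `A` (`hasDerivAt_W`). Tilting by this `σ` and recentring at `A`
turns `exp (-ψ)` into a centred probability density `p`. The powers of the normalising constant and
the exponentials independent of `y` are common to both partition functions and cancel in `G_N`;
what remains is a factor `exp (-σ (A - y))` and the convolution power of `p` at `A - y`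
(`tilt_convPow`, `chain_partition`).

The local limit theorem (`local_limit`) says that `√n p^{*n}(x)` is bounded uniformly in `n` and `x`
and tends to a positive constant independent of `x`. It follows from Fourier inversion, the
central limit theorem for characteristic functions, and the bound `|p̂(t)| ≤ 1 / (1 + c t²)`, whose
`n`-th power at `t / √n` is again at most `1 / (1 + c t²)`. That bound combines the decay of `p̂` at
infinity (two integrable derivatives) with a Gaussian minorant of `p` (from `ψ'' ≤ κ₂`), which keeps
`|p̂|` away from `1` off the origin. Dominated convergence in `y` then gives the ratio of integrals.
-/

noncomputable section

open MeasureTheory Real Filter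

/-- Extend interior degrees of freedom `u : ℝ^(n-1)` to the whole chain via the
boundary conditions `u 0 = 0` and `u n = b`. -/
def bc (n : ℕ) (b : ℝ) (u : Fin (n - 1) → ℝ) : ℕ → ℝ := fun i =>
  if h : 0 < i ∧ i < n then u ⟨i - 1, by omega⟩ else if i = 0 then 0 else b

/-- The chain energy `∑_{i=1}^n φ_i (u_i - u_{i-1})` with boundary conditions
`u 0 = 0`, `u n = b`. -/
def chainE (φ : ℕ → ℝ → ℝ) (n : ℕ) (b : ℝ) (u : Fin (n - 1) → ℝ) : ℝ :=
  ∑ i ∈ Finset.range n, φ (i + 1) (bc n b u (i + 1) - bc n b u i)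

/-- The free energy `-log ∫_{ℝ^{N-1}} exp(-∑ φ_i(u_i-u_{i-1}) - defect(u₁)) du`. -/
def freeEnergy (φ : ℕ → ℝ → ℝ) (defect : ℝ → ℝ) (N : ℕ) (A : ℝ) : ℝ :=
  - Real.log (∫ u : Fin (N - 1) → ℝ,
      Real.exp (-(chainE φ N (N * A) u) - defect (bc N (N * A) u 1)))

/-- The Cauchy–Born strain energy `W(A)`. -/
def W (ψ : ℝ → ℝ) (A : ℝ) : ℝ :=
  ⨆ σ : ℝ, (σ * A - Real.log (∫ y : ℝ, Real.exp (-ψ y + σ * y)))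

/-! ### Integrability and Legendre duality -/

lemma quad_lower {φ : ℝ → ℝ} (hφ : ContDiff ℝ 2 φ) {m : ℝ}
    (h : ∀ y, m ≤ deriv (deriv φ) y) (y : ℝ) :
    φ 0 + deriv φ 0 * y + m / 2 * y ^ 2 ≤ φ y := by
  have hd : Differentiable ℝ φ := hφ.differentiable (by norm_num)
  have hd1 : ContDiff ℝ 1 (deriv φ) := ((contDiff_succ_iff_deriv (n := 1)).1 hφ).2.2
  have hd2 : Differentiable ℝ (deriv φ) := hd1.differentiable (by norm_num)
  have e1 : ∀ y, HasDerivAt (fun y => φ y - m / 2 * y ^ 2) (deriv φ y - m * y) y := fun y => by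
    have := (hd y).hasDerivAt.sub (((hasDerivAt_id y).pow 2).const_mul (m / 2))
    refine this.congr_deriv ?_
    simp; ring
  have e1' : deriv (fun y => φ y - m / 2 * y ^ 2) = fun y => deriv φ y - m * y :=
    funext fun y => (e1 y).deriv
  have e2 : ∀ y, HasDerivAt (fun y => deriv φ y - m * y) (deriv (deriv φ) y - m) y := fun y => by
    have := (hd2 y).hasDerivAt.sub ((hasDerivAt_id y).const_mul m)
    refine this.congr_deriv (by simp)
  have hc : ConvexOn ℝ Set.univ (fun y => φ y - m / 2 * y ^ 2) := by
    refine convexOn_univ_of_deriv2_nonneg (fun y => (e1 y).differentiableAt) ?_ ?_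
    · rw [e1']; exact fun y => (e2 y).differentiableAt
    · intro y
      simp only [Function.iterate_succ, Function.iterate_zero, Function.comp, id]
      rw [e1', (e2 y).deriv]; linarith [h y]
  have h0 := e1 0
  simp only [mul_zero, sub_zero] at h0
  rcases lt_trichotomy y 0 with hy | hy | hy
  · have := hc.slope_le_of_hasDerivAt (Set.mem_univ y) (Set.mem_univ 0) hy h0
    rw [slope_def_field, div_le_iff₀ (by linarith)] at this
    simp at this; nlinarith
  · subst hy; simp
  · have := hc.le_slope_of_hasDerivAt (Set.mem_univ 0) (Set.mem_univ y) hy h0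
    rw [slope_def_field, le_div_iff₀ (by linarith)] at this
    simp at this; nlinarith

lemma quad_upper {φ : ℝ → ℝ} (hφ : ContDiff ℝ 2 φ) {M : ℝ}
    (h : ∀ y, deriv (deriv φ) y ≤ M) (y : ℝ) :
    φ y ≤ φ 0 + deriv φ 0 * y + M / 2 * y ^ 2 := by
  have e : deriv (fun y => -φ y) = fun y => - deriv φ y := funext fun y => deriv.fun_neg
  have := quad_lower (φ := fun y => -φ y) hφ.neg (m := -M)
    (fun y => by rw [e, deriv.fun_neg]; linarith [h y]) y
  rw [e] at this
  linarith

/-- Anything continuous that is at most quadratic times a Boltzmann weight with uniformly convex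
energy is integrable, for every linear tilt. -/
lemma integrable_of_quad {φ : ℝ → ℝ} (hφ : ContDiff ℝ 2 φ) {m : ℝ} (hm : 0 < m)
    (h : ∀ y, m ≤ deriv (deriv φ) y) (s C : ℝ) (hC : 0 ≤ C) {f : ℝ → ℝ} (hf : Continuous f)
    (hb : ∀ y, |f y| ≤ C * (1 + y ^ 2) * exp (-φ y + s * y)) : Integrable f := by
  set b := s - deriv φ 0 with hbdef
  have key : ∀ y, |f y| ≤ C * ((1 + 8 / m) * exp (2 * b ^ 2 / m - φ 0)) * exp (-(m / 4) * y ^ 2) := by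
    intro y
    have h1 := quad_lower hφ h y
    have h2 : b * y ≤ m / 8 * y ^ 2 + 2 * b ^ 2 / m := by
      have : m / 8 * y ^ 2 + 2 * b ^ 2 / m - b * y = (m * y - 4 * b) ^ 2 / (8 * m) := by
        field_simp; ring
      have h3 : 0 ≤ (m * y - 4 * b) ^ 2 / (8 * m) := by positivity
      linarith
    have h4 : 1 + y ^ 2 ≤ (1 + 8 / m) * exp (m / 8 * y ^ 2) := by
      have h5 := add_one_le_exp (m / 8 * y ^ 2)
      have h6 : 1 ≤ exp (m / 8 * y ^ 2) := one_le_exp (by positivity)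
      have : y ^ 2 = 8 / m * (m / 8 * y ^ 2) := by field_simp
      have h7 : 8 / m * (m / 8 * y ^ 2) ≤ 8 / m * exp (m / 8 * y ^ 2) := by
        gcongr; linarith
      linarith
    have h8 : exp (-φ y + s * y) ≤ exp ((2 * b ^ 2 / m - φ 0) + (-(3 * m / 8) * y ^ 2)) := by
      apply exp_le_exp.2
      have : s * y = b * y + deriv φ 0 * y := by rw [hbdef]; ring
      nlinarith
    calc |f y| ≤ C * (1 + y ^ 2) * exp (-φ y + s * y) := hb y
      _ ≤ C * ((1 + 8 / m) * exp (m / 8 * y ^ 2)) *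
          exp ((2 * b ^ 2 / m - φ 0) + (-(3 * m / 8) * y ^ 2)) := by gcongr
      _ = C * ((1 + 8 / m) * exp (2 * b ^ 2 / m - φ 0)) *
          (exp (m / 8 * y ^ 2) * exp (-(3 * m / 8) * y ^ 2)) := by rw [exp_add]; ring
      _ = _ := by rw [← exp_add]; congr 2; ring
  refine Integrable.mono' ((integrable_exp_neg_mul_sq (b := m / 4) (by positivity)).const_mul
    (C * ((1 + 8 / m) * exp (2 * b ^ 2 / m - φ 0)))) hf.aestronglyMeasurable (ae_of_all _ key)

lemma integrable_boltzmann {φ : ℝ → ℝ} (hφ : ContDiff ℝ 2 φ) {m : ℝ} (hm : 0 < m)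
    (h : ∀ y, m ≤ deriv (deriv φ) y) (s : ℝ) : Integrable (fun y => exp (-φ y + s * y)) := by
  have := hφ.continuous
  refine integrable_of_quad hφ hm h s 1 zero_le_one (by fun_prop) (fun y => ?_)
  rw [abs_of_pos (exp_pos _)]
  nlinarith [exp_pos (-φ y + s * y), mul_nonneg (sq_nonneg y) (exp_pos (-φ y + s * y)).le]

/-- The log-partition function `Λ(σ) = log ∫ exp (-ψ y + σ y) dy`, whose Legendre transform is
the Cauchy–Born energy. -/
def logZ (ψ : ℝ → ℝ) (σ : ℝ) : ℝ := Real.log (∫ y : ℝ, Real.exp (-ψ y + σ * y))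

/-- The Legendre transform of a function whose derivative is an increasing bijection of `ℝ` is
differentiable, with derivative the inverse of that bijection. -/
lemma hasDerivAt_legendre {Λ : ℝ → ℝ} (hd : Differentiable ℝ Λ) (hm : StrictMono (deriv Λ))
    (hs : Function.Surjective (deriv Λ)) (σ : ℝ) :
    HasDerivAt (fun A => ⨆ s : ℝ, (s * A - Λ s)) σ (deriv Λ σ) := by
  have hc : ConvexOn ℝ Set.univ Λ := hm.monotone.convexOn_univ_of_deriv hd
  have tang : ∀ a b, Λ a + deriv Λ a * (b - a) ≤ Λ b := by
    intro a b
    have h0 := (hd a).hasDerivAt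
    rcases lt_trichotomy b a with hy | hy | hy
    · have := hc.slope_le_of_hasDerivAt (Set.mem_univ b) (Set.mem_univ a) hy h0
      rw [slope_def_field, div_le_iff₀ (by linarith)] at this
      nlinarith
    · subst hy; simp
    · have := hc.le_slope_of_hasDerivAt (Set.mem_univ a) (Set.mem_univ b) hy h0
      rw [slope_def_field, le_div_iff₀ (by linarith)] at this
      nlinarith
  let e := StrictMono.orderIsoOfSurjective (deriv Λ) hm hs
  have he : ∀ B, deriv Λ (e.symm B) = B := fun B => e.apply_symm_apply B
  have he' : ∀ s, e.symm (deriv Λ s) = s := fun s => e.symm_apply_apply s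
  have hcont : Continuous e.symm := e.symm.continuous
  have hval : ∀ B, (⨆ s : ℝ, (s * B - Λ s)) = e.symm B * B - Λ (e.symm B) := by
    intro B
    apply le_antisymm
    · refine ciSup_le fun s => ?_
      have := tang (e.symm B) s
      rw [he] at this; linarith
    · refine le_ciSup (f := fun s => s * B - Λ s) ⟨e.symm B * B - Λ (e.symm B), ?_⟩ (e.symm B)
      rintro _ ⟨s, rfl⟩
      have := tang (e.symm B) s
      rw [he] at this; dsimp only; linarith
  rw [funext hval]
  set A := deriv Λ σ with hA
  have hσ : e.symm A = σ := he' σ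
  rw [hasDerivAt_iff_isLittleO]
  have h1 : (fun B => e.symm B * B - Λ (e.symm B) - (e.symm A * A - Λ (e.symm A)) - (B - A) • σ)
      =O[nhds A] fun B => (e.symm B - e.symm A) * (B - A) := by
    refine Asymptotics.IsBigO.of_bound 1 (Eventually.of_forall fun B => ?_)
    have t1 := tang (e.symm B) (e.symm A)
    have t2 := tang (e.symm A) (e.symm B)
    rw [he] at t1 t2
    simp only [smul_eq_mul, norm_eq_abs, one_mul]
    rw [hσ] at *
    rw [abs_of_nonneg (by linarith)]
    refine le_trans ?_ (le_abs_self _)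
    linarith
  refine h1.trans_isLittleO ?_
  have h2 : (fun B => e.symm B - e.symm A) =o[nhds A] (fun _ => (1 : ℝ)) := by
    rw [Asymptotics.isLittleO_one_iff]
    have := (hcont.tendsto A).sub_const (e.symm A)
    simpa using this
  simpa using h2.mul_isBigO (Asymptotics.isBigO_refl (fun B => B - A) (nhds A))

/-- `W'(A)` exists, and tilting the Boltzmann weight by `W'(A)` produces mean `A`. -/
lemma hasDerivAt_W {ψ : ℝ → ℝ} (hψ : ContDiff ℝ 2 ψ) {m : ℝ} (hm : 0 < m)
    (h : ∀ y, m ≤ deriv (deriv ψ) y) (A : ℝ) :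
    ∃ σ, HasDerivAt (W ψ) σ A ∧
      (∫ y, y * exp (-ψ y + σ * y)) = A * ∫ y, exp (-ψ y + σ * y) := by
  have hcψ := hψ.continuous
  set μ : Measure ℝ := volume.withDensity (fun y => ENNReal.ofReal (exp (-ψ y))) with hμ
  have hmeas : Measurable (fun y => ENNReal.ofReal (exp (-ψ y))) := by fun_prop
  have hwInt : ∀ s, Integrable (fun y => exp (-ψ y + s * y)) := integrable_boltzmann hψ hm h
  have hI : ∀ (f : ℝ → ℝ), ∫ y, f y ∂μ = ∫ y, exp (-ψ y) * f y := by
    intro f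
    rw [hμ, integral_withDensity_eq_integral_toReal_smul hmeas (by simp)]
    refine integral_congr_ae (ae_of_all _ fun y => ?_)
    simp [ENNReal.toReal_ofReal (exp_pos _).le]
  have hII : ∀ s, Integrable (fun y => exp (s * y)) μ := by
    intro s
    rw [hμ, integrable_withDensity_iff_integrable_smul' hmeas (by simp)]
    refine (hwInt s).congr (ae_of_all _ fun y => ?_)
    simp [ENNReal.toReal_ofReal (exp_pos _).le, exp_add]
  have hset : ∀ s, s ∈ interior (ProbabilityTheory.integrableExpSet id μ) := by
    intro s
    have : ProbabilityTheory.integrableExpSet id μ = Set.univ :=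
      Set.eq_univ_of_forall fun s => hII s
    rw [this]; simp
  have hmgf : ∀ s, ProbabilityTheory.mgf id μ s = ∫ y, exp (-ψ y + s * y) := by
    intro s
    rw [ProbabilityTheory.mgf, hI]
    simp [exp_add]
  have hpos : ∀ s, 0 < ∫ y, exp (-ψ y + s * y) := fun s => by
    have := integral_exp_pos (μ := volume) (hwInt s)
    exact this
  have hcgf : ProbabilityTheory.cgf id μ = logZ ψ := by
    funext s; rw [ProbabilityTheory.cgf, hmgf, logZ]
  have hdiff : Differentiable ℝ (logZ ψ) := fun s => by
    rw [← hcgf]; exact (ProbabilityTheory.analyticAt_cgf (hset s)).differentiableAt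
  have hderiv : ∀ s, deriv (logZ ψ) s =
      (∫ y, y * exp (-ψ y + s * y)) / ∫ y, exp (-ψ y + s * y) := by
    intro s
    rw [← hcgf, ProbabilityTheory.deriv_cgf (hset s), hmgf, hI]
    congr 2; funext y; simp only [id, exp_add]; ring
  have hstrict : StrictMono (deriv (logZ ψ)) := by
    refine strictMono_of_deriv_pos fun s => ?_
    have h2 := ProbabilityTheory.iteratedDeriv_two_cgf_eq_integral (hset s)
    rw [iteratedDeriv_succ, iteratedDeriv_one, hcgf, hmgf, hI] at h2
    rw [h2]
    refine div_pos ?_ (hpos s)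
    set a := deriv (logZ ψ) s
    have hfi : Integrable (fun y => exp (-ψ y) * ((y - a) ^ 2 * exp (s * y))) := by
      refine integrable_of_quad hψ hm h s (2 * (1 + a ^ 2)) (by positivity) (by fun_prop) fun y => ?_
      rw [abs_of_nonneg (by positivity), exp_add]
      have : (y - a) ^ 2 ≤ 2 * (1 + a ^ 2) * (1 + y ^ 2) := by
        nlinarith [sq_nonneg (y + a), sq_nonneg (a * y)]
      nlinarith [mul_le_mul_of_nonneg_right this (mul_pos (exp_pos (-ψ y)) (exp_pos (s * y))).le]
    refine (integral_pos_iff_support_of_nonneg (fun y => by positivity) hfi).2 ?_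
    have hsub : Set.Ioi a ⊆ Function.support
        (fun y => exp (-ψ y) * ((y - a) ^ 2 * exp (s * y))) := by
      intro y hy
      have : 0 < y - a := sub_pos.2 hy
      simp only [Function.mem_support]; positivity
    exact lt_of_lt_of_le (by simp) (measure_mono hsub)
  -- Superlinear growth of the log-partition function from the mass of a single unit interval.
  have hgrow : ∀ B, ∃ c, ∀ s d, (∀ y ∈ Set.Icc B (B + 1), d ≤ s * y) → c + d ≤ logZ ψ s := by
    intro B
    obtain ⟨M, hM⟩ := (isCompact_Icc (a := B) (b := B + 1)).bddAbove_image hcψ.continuousOn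
    have hM' : ∀ y ∈ Set.Icc B (B + 1), ψ y ≤ M := fun y hy => hM ⟨y, hy, rfl⟩
    refine ⟨-M, fun s d hd => ?_⟩
    rw [logZ, le_log_iff_exp_le (hpos s)]
    calc exp (-M + d) = ∫ y in Set.Icc B (B + 1), exp (-M + d) := by simp
      _ ≤ ∫ y in Set.Icc B (B + 1), exp (-ψ y + s * y) := by
          refine setIntegral_mono_on (by simp) (hwInt s).integrableOn measurableSet_Icc ?_
          intro y hy
          exact exp_le_exp.2 (by linarith [hM' y hy, hd y hy])
      _ ≤ ∫ y, exp (-ψ y + s * y) :=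
          setIntegral_le_integral (hwInt s) (ae_of_all _ fun y => (exp_pos _).le)
  have hsurj : Function.Surjective (deriv (logZ ψ)) := by
    intro B
    obtain ⟨c₁, h₁⟩ := hgrow (B + 1)
    obtain ⟨c₂, h₂⟩ := hgrow (B - 2)
    have hlow : ∀ s, min c₁ c₂ + |s| ≤ logZ ψ s - s * B := by
      intro s
      rcases le_total 0 s with hs | hs
      · have := h₁ s (s * (B + 1)) (fun y hy => mul_le_mul_of_nonneg_left hy.1 hs)
        rw [abs_of_nonneg hs]; linarith [min_le_left c₁ c₂]
      · have := h₂ s (s * (B - 1)) (fun y hy =>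
          mul_le_mul_of_nonpos_left (by linarith [hy.2]) hs)
        rw [abs_of_nonpos hs]; linarith [min_le_right c₁ c₂]
    have hcont : Continuous (fun s => logZ ψ s - s * B) := by
      have := hdiff.continuous; fun_prop
    have htend : Tendsto (fun s => logZ ψ s - s * B) (cocompact ℝ) atTop := by
      refine tendsto_atTop_mono hlow ?_
      exact tendsto_atTop_add_const_left _ _ (tendsto_norm_cocompact_atTop (E := ℝ))
    obtain ⟨s, hs⟩ := hcont.exists_forall_le htend
    have hmin : IsLocalMin (fun s => logZ ψ s - s * B) s := Eventually.of_forall hs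
    have hder : HasDerivAt (fun s => logZ ψ s - s * B) (deriv (logZ ψ) s - B) s := by
      have := (hdiff s).hasDerivAt.sub ((hasDerivAt_id s).mul_const B)
      exact this.congr_deriv (by simp)
    exact ⟨s, by linarith [hmin.hasDerivAt_eq_zero hder]⟩
  obtain ⟨σ, hσ⟩ := hsurj A
  refine ⟨σ, ?_, ?_⟩
  · have := hasDerivAt_legendre hdiff hstrict hsurj σ
    rw [hσ] at this
    exact this
  · rw [hderiv, div_eq_iff (hpos σ).ne'] at hσ
    exact hσ

/-! ### Bounds on the characteristic function -/

/-- The Fourier transform of a real function, in Mathlib's normalisation `e^{-2πi t y}`. -/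
def ft (p : ℝ → ℝ) (t : ℝ) : ℂ := FourierTransform.fourier (fun y => (p y : ℂ)) t

lemma ft_eq (p : ℝ → ℝ) (t : ℝ) :
    ft p t = ∫ y : ℝ, Complex.exp (↑(-2 * π * y * t) * Complex.I) * (p y : ℂ) := by
  rw [ft, fourier_real_eq_integral_exp_smul]; rfl

lemma norm_ft_le (p : ℝ → ℝ) (t : ℝ) : ‖ft p t‖ ≤ ∫ y, |p y| := by
  rw [ft_eq]
  refine (norm_integral_le_integral_norm _).trans (le_of_eq ?_)
  congr 1; funext y
  rw [norm_mul, Complex.norm_exp_ofReal_mul_I, one_mul, Complex.norm_real, norm_eq_abs]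

lemma integrable_ft_integrand {p : ℝ → ℝ} (hp : Integrable p) (t : ℝ) :
    Integrable fun y : ℝ => Complex.exp (↑(-2 * π * y * t) * Complex.I) * (p y : ℂ) := by
  refine hp.ofReal.bdd_mul (c := 1) ?_ (ae_of_all _ fun y => ?_)
  · exact Continuous.aestronglyMeasurable (by fun_prop)
  · rw [Complex.norm_exp_ofReal_mul_I]

/-- Two integrable derivatives give quadratic decay of the Fourier transform. -/
lemma ft_decay {p p₁ p₂ : ℝ → ℝ} (h₁ : ∀ x, HasDerivAt p (p₁ x) x)
    (h₂ : ∀ x, HasDerivAt p₁ (p₂ x) x) (i₀ : Integrable p) (i₁ : Integrable p₁)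
    (i₂ : Integrable p₂) (t : ℝ) : t ^ 2 * ‖ft p t‖ ≤ ∫ y, |p₂ y| := by
  have e₁ : deriv (fun y => (p y : ℂ)) = fun y => (p₁ y : ℂ) :=
    funext fun y => (h₁ y).ofReal_comp.deriv
  have e₂ : deriv (fun y => (p₁ y : ℂ)) = fun y => (p₂ y : ℂ) :=
    funext fun y => (h₂ y).ofReal_comp.deriv
  have f₁ := fourier_deriv (f := fun y => (p y : ℂ)) i₀.ofReal
    (fun y => (h₁ y).ofReal_comp.differentiableAt) (by rw [e₁]; exact i₁.ofReal)
  have f₂ := fourier_deriv (f := fun y => (p₁ y : ℂ)) i₁.ofReal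
    (fun y => (h₂ y).ofReal_comp.differentiableAt) (by rw [e₂]; exact i₂.ofReal)
  rw [e₁] at f₁
  rw [e₂, f₁] at f₂
  have h := norm_ft_le p₂ t
  have h3 : ft p₂ t = _ := congrFun f₂ t
  rw [h3] at h
  simp only [smul_eq_mul, norm_mul, Complex.norm_real, Complex.norm_I, norm_eq_abs, mul_one,
    Complex.norm_ofNat, abs_of_pos pi_pos] at h
  refine le_trans ?_ h
  have : t ^ 2 = |t| * |t| := by rw [← abs_mul, abs_of_nonneg (mul_self_nonneg t), sq]
  change t ^ 2 * ‖ft p t‖ ≤ 2 * π * |t| * (2 * π * |t| * ‖ft p t‖)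
  rw [this]
  have h4 : 1 ≤ 2 * π * (2 * π) := by nlinarith [pi_gt_three]
  have h5 : 0 ≤ |t| * |t| * ‖ft p t‖ := by positivity
  nlinarith

/-- A density that dominates a multiple of a Gaussian has a characteristic function bounded away
from `1` at the rate of that Gaussian. -/
lemma ft_le_of_gaussian_minorant {p : ℝ → ℝ} (hp : Integrable p) (hp1 : ∫ y, p y = 1)
    {ε a : ℝ} (hε : 0 < ε) (ha : 0 < a) (hge : ∀ y, ε * exp (-a * y ^ 2) ≤ p y) :
    ∃ δ > 0, ∃ b > 0, ∀ t, ‖ft p t‖ ≤ 1 - δ * (1 - exp (-b * t ^ 2)) := by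
  have hgi : Integrable (fun y : ℝ => ε * exp (-a * y ^ 2)) :=
    (integrable_exp_neg_mul_sq ha).const_mul ε
  refine ⟨ε * √(π / a), by positivity, π ^ 2 / a, by positivity, fun t => ?_⟩
  have hsplit : ft p t = ft (fun y => p y - ε * exp (-a * y ^ 2)) t +
      ft (fun y => ε * exp (-a * y ^ 2)) t := by
    rw [ft_eq, ft_eq, ft_eq, ← integral_add (integrable_ft_integrand
      (p := fun y => p y - ε * exp (-a * y ^ 2)) (hp.sub hgi) t)
      (integrable_ft_integrand hgi t)]
    congr 1; funext y; push_cast; ring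
  have h1 : ‖ft (fun y => p y - ε * exp (-a * y ^ 2)) t‖ ≤ 1 - ε * √(π / a) := by
    refine (norm_ft_le _ t).trans (le_of_eq ?_)
    have : ∀ y, |p y - ε * exp (-a * y ^ 2)| = p y - ε * exp (-a * y ^ 2) := fun y =>
      abs_of_nonneg (by linarith [hge y])
    simp_rw [this]
    rw [integral_sub hp hgi, hp1, integral_const_mul, integral_gaussian]
  have h2 : ft (fun y => ε * exp (-a * y ^ 2)) t =
      ((ε * √(π / a) * exp (-(π ^ 2 / a) * t ^ 2) : ℝ) : ℂ) := by
    have := fourierIntegral_gaussian (b := (a : ℂ)) (by simpa using ha) (-2 * π * t)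
    have e3 : ((π : ℂ) / a) ^ (1 / 2 : ℂ) = ((√(π / a) : ℝ) : ℂ) := by
      rw [Real.sqrt_eq_rpow, Complex.ofReal_cpow (by positivity)]; push_cast; rfl
    rw [e3] at this
    rw [ft_eq]
    have e4 : ∀ y : ℝ, Complex.exp (↑(-2 * π * y * t) * Complex.I) *
        ((ε * exp (-a * y ^ 2) : ℝ) : ℂ) =
        ε * (Complex.exp (Complex.I * (-2 * π * t) * y) * Complex.exp (-a * y ^ 2)) := by
      intro y
      push_cast
      rw [show (-2 * (π : ℂ) * y * t * Complex.I) = Complex.I * (-2 * π * t) * y by ring]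
      ring
    simp_rw [e4]
    rw [integral_const_mul, this]
    push_cast
    rw [show (-(-2 * (π : ℂ) * t) ^ 2 / (4 * a)) = -(π ^ 2 / a) * t ^ 2 by ring]
    ring
  have h3 : ‖ft (fun y => ε * exp (-a * y ^ 2)) t‖ =
      ε * √(π / a) * exp (-(π ^ 2 / a) * t ^ 2) := by
    rw [h2, Complex.norm_real, norm_eq_abs, abs_of_nonneg (by positivity)]
  rw [hsplit]
  refine (norm_add_le _ _).trans ?_
  rw [h3]; linarith

/-- Quadratic decay at infinity and a Gaussian gap near `0` combine into one bound. Applied to the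
modulus of a characteristic function it gives integrability and, through the inequality
`1 + n x ≤ (1 + x) ^ n`, the domination in the local limit theorem. -/
lemma ft_le_inv {f : ℝ → ℝ} {M δ b : ℝ} (hδ : 0 < δ) (hb : 0 < b)
    (h1 : ∀ t, t ^ 2 * f t ≤ M) (h2 : ∀ t, f t ≤ 1 - δ * (1 - exp (-b * t ^ 2))) :
    ∃ c > 0, ∀ t, f t ≤ 1 / (1 + c * t ^ 2) := by
  set M' := max M 1
  have hM' : 1 ≤ M' := le_max_right _ _
  have hMM : M ≤ M' := le_max_left _ _
  refine ⟨min (1 / (2 * M')) (δ * b / (1 + b * (2 * M'))), by positivity, fun t => ?_⟩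
  set c := min (1 / (2 * M')) (δ * b / (1 + b * (2 * M'))) with hc
  have hc0 : 0 < c := by positivity
  have hc1 : c * (2 * M') ≤ 1 := (le_div_iff₀ (by positivity)).1 (min_le_left _ _)
  have hc2 : c * (1 + b * (2 * M')) ≤ δ * b := (le_div_iff₀ (by positivity)).1 (min_le_right _ _)
  rw [le_div_iff₀ (by positivity)]
  rcases le_total (t ^ 2) (2 * M') with ht | ht
  · have hx : δ * (1 - exp (-b * t ^ 2)) ≥ c * t ^ 2 := by
      have h3 : exp (-b * t ^ 2) ≤ 1 / (1 + b * t ^ 2) := by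
        rw [neg_mul, exp_neg, ← one_div]
        apply one_div_le_one_div_of_le (by positivity)
        linarith [add_one_le_exp (b * t ^ 2)]
      have h4 : 1 - exp (-b * t ^ 2) ≥ b * t ^ 2 / (1 + b * t ^ 2) := by
        have : b * t ^ 2 / (1 + b * t ^ 2) = 1 - 1 / (1 + b * t ^ 2) := by
          field_simp; ring
        linarith
      have h5 : c * t ^ 2 ≤ δ * (b * t ^ 2 / (1 + b * t ^ 2)) := by
        rw [mul_div_assoc', le_div_iff₀ (by positivity)]
        have h6 : c * (1 + b * t ^ 2) ≤ δ * b := by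
          refine le_trans ?_ hc2
          gcongr
        nlinarith [mul_le_mul_of_nonneg_right h6 (sq_nonneg t)]
      exact h5.trans (mul_le_mul_of_nonneg_left h4 hδ.le)
    have h7 : f t ≤ 1 - c * t ^ 2 := by linarith [h2 t]
    have h8 : 0 ≤ c * t ^ 2 := by positivity
    nlinarith [mul_le_mul_of_nonneg_right h7 (by positivity : 0 ≤ 1 + c * t ^ 2)]
  · have hft := h1 t
    have ht0 : 0 < t ^ 2 := by linarith
    have h9 : t ^ 2 * (f t * (1 + c * t ^ 2)) ≤ t ^ 2 * 1 := by
      have e : t ^ 2 * (f t * (1 + c * t ^ 2)) = (t ^ 2 * f t) * (1 + c * t ^ 2) := by ring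
      rw [e]
      calc (t ^ 2 * f t) * (1 + c * t ^ 2) ≤ M' * (1 + c * t ^ 2) := by
            gcongr; linarith
        _ ≤ t ^ 2 * 1 := by nlinarith
    exact le_of_mul_le_mul_left h9 ht0

/-! ### Local limit theorem -/

lemma integrable_inv_quad {c : ℝ} (hc0 : 0 < c) :
    Integrable (fun t : ℝ => 1 / (1 + c * t ^ 2)) := by
  have := integrable_inv_one_add_sq.comp_mul_left' (R := √c) (by positivity)
  refine this.congr (ae_of_all _ fun t => ?_)
  simp [mul_pow, sq_sqrt hc0.le]

lemma variance_pos {p : ℝ → ℝ} (hpos : ∀ x, 0 < p x)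
    (hvar : Integrable (fun y => y ^ 2 * p y)) : 0 < ∫ y, y ^ 2 * p y := by
  refine (integral_pos_iff_support_of_nonneg
    (fun y => mul_nonneg (sq_nonneg y) (hpos y).le) hvar).2 ?_
  have hsub : Set.Ioi (0 : ℝ) ⊆ Function.support (fun y => y ^ 2 * p y) := by
    intro y hy
    have h1 : 0 < y := hy
    have := hpos y
    simp only [Function.mem_support]; positivity
  exact lt_of_lt_of_le (by simp) (measure_mono hsub)

lemma continuous_ft {p : ℝ → ℝ} (hp : Integrable p) : Continuous (ft p) := by
  have : ft p = fun t => ∫ y : ℝ, Complex.exp (↑(-2 * π * y * t) * Complex.I) * (p y : ℂ) :=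
    funext (ft_eq p)
  rw [this]
  refine continuous_of_dominated (bound := fun y => |p y|)
    (fun t => (integrable_ft_integrand hp t).aestronglyMeasurable) (fun t => ae_of_all _ fun y => ?_)
    hp.abs (ae_of_all _ fun y => by fun_prop)
  rw [norm_mul, Complex.norm_exp_ofReal_mul_I, one_mul, Complex.norm_real, norm_eq_abs]

/-- `convPow p n` is the `(n+1)`-fold convolution power of `p`. -/
def convPow (p : ℝ → ℝ) : ℕ → ℝ → ℝ
  | 0 => p
  | n + 1 => fun x => ∫ y, p y * convPow p n (x - y)

/-- Fourier inversion for convolution powers. -/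
lemma convPow_eq_ft {p : ℝ → ℝ} (hc : Continuous p) (hp : Integrable p)
    {c : ℝ} (hc0 : 0 < c) (hb : ∀ t, ‖ft p t‖ ≤ 1 / (1 + c * t ^ 2)) (n : ℕ) (x : ℝ) :
    (convPow p n x : ℂ) = ∫ t : ℝ, ft p t ^ (n + 1) * Complex.exp (↑(2 * π * t * x) * Complex.I) := by
  have hcont := continuous_ft hp
  have hle1 : ∀ t, ‖ft p t‖ ≤ 1 := fun t => (hb t).trans (by
    rw [div_le_one (by positivity)]; nlinarith [mul_nonneg hc0.le (sq_nonneg t)])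
  have hbi := integrable_inv_quad hc0
  have hpow : ∀ k : ℕ, Integrable (fun t => ft p t ^ (k + 1)) := fun k => by
    refine hbi.mono' (hcont.pow _).aestronglyMeasurable (ae_of_all _ fun t => ?_)
    rw [norm_pow]
    exact (pow_le_of_le_one (norm_nonneg _) (hle1 t) (by omega)).trans (hb t)
  induction n generalizing x with
  | zero =>
    have h1 : Integrable (FourierTransform.fourier (fun y => (p y : ℂ))) := by
      have := hpow 0
      simp only [zero_add, pow_one] at this
      exact this
    have h2 := hp.ofReal.fourierInv_fourier_eq h1 (v := x)
      ((Complex.continuous_ofReal.comp hc).continuousAt)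
    rw [Real.fourierInv_eq'] at h2
    simp only [convPow]
    refine h2.symm.trans ?_
    congr 1; funext t
    simp only [zero_add, pow_one, smul_eq_mul]
    rw [mul_comm]
    congr 3
    simp; ring
  | succ n ih =>
    have e : (convPow p (n + 1) x : ℂ) = ∫ y : ℝ, ∫ t : ℝ, (p y : ℂ) *
        (ft p t ^ (n + 1) * Complex.exp (↑(2 * π * t * (x - y)) * Complex.I)) := by
      simp only [convPow]
      rw [← integral_complex_ofReal]
      congr 1; funext y
      push_cast
      rw [ih, integral_const_mul]
      push_cast; rfl
    rw [e, integral_integral_swap]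
    · congr 1; funext t
      have hr : ft p t ^ (n + 1 + 1) * Complex.exp (↑(2 * π * t * x) * Complex.I) =
          ft p t * (ft p t ^ (n + 1) * Complex.exp (↑(2 * π * t * x) * Complex.I)) := by ring
      rw [hr]
      conv_rhs => enter [1]; rw [ft_eq p t]
      rw [← integral_mul_const]
      congr 1; funext y
      have : Complex.exp (↑(2 * π * t * (x - y)) * Complex.I) =
          Complex.exp (↑(-2 * π * y * t) * Complex.I) *
          Complex.exp (↑(2 * π * t * x) * Complex.I) := by
        rw [← Complex.exp_add]; congr 1; push_cast; ring
      rw [this]; ring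
    · have h1 : Integrable (fun z : ℝ × ℝ => (p z.1 : ℂ) * ft p z.2 ^ (n + 1))
          (volume.prod volume) := Integrable.mul_prod (f := fun y => (p y : ℂ)) hp.ofReal (hpow n)
      have h2 := h1.bdd_mul (c := 1)
        (f := fun z : ℝ × ℝ => Complex.exp (↑(2 * π * z.2 * (x - z.1)) * Complex.I))
        (Continuous.aestronglyMeasurable (by fun_prop))
        (ae_of_all _ fun z => by rw [Complex.norm_exp_ofReal_mul_I])
      refine h2.congr (ae_of_all _ fun z => ?_)
      simp only [Function.uncurry]; ring

/-- The characteristic-function form of the central limit theorem, for a centred density. -/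
lemma tendsto_ft_pow {p : ℝ → ℝ} (hc : Continuous p) (hp : Integrable p) (hpos : ∀ x, 0 < p x)
    (hp1 : ∫ y, p y = 1) (hmean : ∫ y, y * p y = 0)
    (hvar : Integrable (fun y => y ^ 2 * p y)) (s : ℝ) :
    Tendsto (fun n : ℕ => ft p (s / √n) ^ n) atTop
      (nhds ((exp (-(2 * π ^ 2 * (∫ y, y ^ 2 * p y)) * s ^ 2) : ℝ) : ℂ)) := by
  set v := ∫ y, y ^ 2 * p y with hv
  have hv0 : 0 < v := variance_pos hpos hvar
  set μ : Measure ℝ := volume.withDensity (fun y => ENNReal.ofReal (p y)) with hμ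
  have hmeas : Measurable (fun y => ENNReal.ofReal (p y)) := by fun_prop
  have hprob : IsProbabilityMeasure μ := ⟨by
    rw [hμ, withDensity_apply _ MeasurableSet.univ, Measure.restrict_univ,
      ← ofReal_integral_eq_lintegral_ofReal hp (ae_of_all _ fun y => (hpos y).le), hp1]
    simp⟩
  have hI : ∀ {E : Type} [NormedAddCommGroup E] [NormedSpace ℝ E] (f : ℝ → E),
      ∫ y, f y ∂μ = ∫ y, p y • f y := by
    intro E _ _ f
    rw [hμ, integral_withDensity_eq_integral_toReal_smul hmeas (by simp)]
    refine integral_congr_ae (ae_of_all _ fun y => ?_)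
    simp [ENNReal.toReal_ofReal (hpos y).le]
  have hsq : √v ≠ 0 := by positivity
  have hsq2 : √v ^ 2 = v := sq_sqrt hv0.le
  let X : ℝ → ℝ := fun y => (√v)⁻¹ * y
  have hX : Measurable X := by fun_prop
  have h0 : ∫ y, X y ∂μ = 0 := by
    rw [hI]
    have : ∀ y, p y • X y = (√v)⁻¹ * (y * p y) := fun y => by simp [X]; ring
    simp_rw [this]; rw [integral_const_mul, hmean, mul_zero]
  have h1 : ∫ y, (X ^ 2) y ∂μ = 1 := by
    rw [hI]
    have : ∀ y, p y • (X ^ 2) y = v⁻¹ * (y ^ 2 * p y) := fun y => by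
      simp [X, mul_pow, hsq2]; ring
    simp_rw [this]; rw [integral_const_mul, ← hv, inv_mul_cancel₀ hv0.ne']
  have key := ProbabilityTheory.tendsto_charFun_inv_sqrt_mul_pow hX.aemeasurable h0 h1
    (-2 * π * √v * s)
  have e1 : ∀ n : ℕ, charFun (μ.map X) ((√n)⁻¹ * (-2 * π * √v * s)) = ft p (s / √n) := by
    intro n
    rw [charFun_apply_real, integral_map hX.aemeasurable
      (Continuous.aestronglyMeasurable (by fun_prop)), hI, ft_eq]
    congr 1; funext y
    rw [Complex.real_smul, mul_comm]
    congr 2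
    simp only [X]
    push_cast
    have : (√v : ℂ) ≠ 0 := by exact_mod_cast hsq
    field_simp
  simp_rw [e1] at key
  convert key using 2
  push_cast
  congr 1
  have : (v : ℂ) = (√v : ℂ) ^ 2 := by exact_mod_cast hsq2.symm
  rw [this]; ring

/-- **Local limit theorem** for convolution powers of a centred density whose characteristic
function is bounded by `1 / (1 + c t²)`: the rescaled powers converge pointwise to a positive
constant and are uniformly bounded. -/
lemma local_limit {p : ℝ → ℝ} (hc : Continuous p) (hp : Integrable p) (hpos : ∀ x, 0 < p x)
    (hp1 : ∫ y, p y = 1) (hmean : ∫ y, y * p y = 0)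
    (hvar : Integrable (fun y => y ^ 2 * p y))
    {c : ℝ} (hc0 : 0 < c) (hb : ∀ t, ‖ft p t‖ ≤ 1 / (1 + c * t ^ 2)) :
    ∃ K > 0, ∃ C, (∀ x, Tendsto (fun n : ℕ => √(n + 1 : ℕ) * convPow p n x) atTop (nhds K)) ∧
      ∀ n x, |√(n + 1 : ℕ) * convPow p n x| ≤ C := by
  have hv0 := variance_pos hpos hvar
  have hcont := continuous_ft hp
  have hbi := integrable_inv_quad hc0
  set a := 2 * π ^ 2 * ∫ y, y ^ 2 * p y with ha
  have ha0 : 0 < a := by positivity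
  -- The integrand after rescaling frequency by `√(n+1)`.
  let F : ℝ → ℕ → ℝ → ℂ := fun x n s => ft p (s / √(n + 1 : ℕ)) ^ (n + 1) *
    Complex.exp (↑(2 * π * (s / √(n + 1 : ℕ)) * x) * Complex.I)
  have hF : ∀ x n, ((√(n + 1 : ℕ) * convPow p n x : ℝ) : ℂ) = ∫ s, F x n s := by
    intro x n
    have := Measure.integral_comp_div (fun t : ℝ => ft p t ^ (n + 1) *
      Complex.exp (↑(2 * π * t * x) * Complex.I)) (√(n + 1 : ℕ))
    simp only [F]
    rw [this, ← convPow_eq_ft hc hp hc0 hb n x, abs_of_nonneg (sqrt_nonneg _)]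
    simp
  have hFb : ∀ x n s, ‖F x n s‖ ≤ 1 / (1 + c * s ^ 2) := by
    intro x n s
    simp only [F]
    rw [norm_mul, Complex.norm_exp_ofReal_mul_I, mul_one, norm_pow]
    have hn : (0 : ℝ) < (n + 1 : ℕ) := by positivity
    have h1 := hb (s / √(n + 1 : ℕ))
    rw [div_pow, sq_sqrt hn.le] at h1
    refine (pow_le_pow_left₀ (norm_nonneg _) h1 _).trans ?_
    rw [div_pow, one_pow]
    apply one_div_le_one_div_of_le (by positivity)
    -- Bernoulli's inequality
    have h2 := one_add_mul_le_pow (a := c * (s ^ 2 / (n + 1 : ℕ)))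
      (by have : 0 ≤ c * (s ^ 2 / (n + 1 : ℕ)) := by positivity
          linarith) (n + 1)
    refine le_trans (le_of_eq ?_) h2
    field_simp
  refine ⟨∫ s, exp (-a * s ^ 2), ?_, ∫ s : ℝ, 1 / (1 + c * s ^ 2), fun x => ?_, fun n x => ?_⟩
  · rw [integral_gaussian]; positivity
  · have hlim : Tendsto (fun n => ∫ s, F x n s) atTop
        (nhds (∫ s, ((exp (-a * s ^ 2) : ℝ) : ℂ))) := by
      refine tendsto_integral_of_dominated_convergence (fun s => 1 / (1 + c * s ^ 2))
        (fun n => ?_) hbi (fun n => ae_of_all _ (hFb x n)) (ae_of_all _ fun s => ?_)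
      · exact Continuous.aestronglyMeasurable (by fun_prop)
      · have h1 := (tendsto_add_atTop_iff_nat 1).2 (tendsto_ft_pow hc hp hpos hp1 hmean hvar s)
        have h2 : Tendsto (fun n : ℕ => s / √(n + 1 : ℕ)) atTop (nhds 0) :=
          (tendsto_add_atTop_iff_nat (f := fun n : ℕ => s / √(n : ℝ)) 1).2
            (Tendsto.div_atTop tendsto_const_nhds
              (tendsto_sqrt_atTop.comp tendsto_natCast_atTop_atTop))
        have h3 : Tendsto (fun n : ℕ => Complex.exp
            (↑(2 * π * (s / √(n + 1 : ℕ)) * x) * Complex.I)) atTop (nhds 1) := by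
          have hg : Continuous (fun u : ℝ => Complex.exp (↑(2 * π * u * x) * Complex.I)) := by
            fun_prop
          have := (hg.tendsto 0).comp h2
          simpa [Function.comp_def] using this
        have := h1.mul h3
        rw [mul_one] at this
        exact this
    simp_rw [← hF x] at hlim
    rw [integral_complex_ofReal] at hlim
    have := (Complex.continuous_re.tendsto _).comp hlim
    simpa only [Function.comp_def, Complex.ofReal_re] using this
  · have := norm_integral_le_of_norm_le hbi (ae_of_all _ (hFb x n))
    rw [← hF x n, Complex.norm_real] at this
    exact this

/-! ### Partition functions as convolutions -/

/-- The extended-real partition function of a chain of `n + 1` bonds (hence `n` free particles)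
with endpoints `0` and `b`. -/
def chainZ (ψ d : ℝ → ℝ) (n : ℕ) (b : ℝ) : ENNReal :=
  ∫⁻ u : Fin n → ℝ, ENNReal.ofReal
    (Real.exp (-(chainE (fun _ => ψ) (n + 1) b u) - d (bc (n + 1) b u 1)))

lemma chainZ_zero (ψ d : ℝ → ℝ) (b : ℝ) :
    chainZ ψ d 0 b = ENNReal.ofReal (exp (-ψ b - d b)) := by
  simp [chainZ, chainE, bc, lintegral_unique, volume_pi]

lemma bc_snoc_of_le {n : ℕ} {b v : ℝ} {u : Fin (n + 1) → ℝ} {u' : Fin n → ℝ}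
    (hlast : u (Fin.last n) = v) (hinit : ∀ j : Fin n, u j.castSucc = u' j) {i : ℕ}
    (hi : i ≤ n + 1) : bc (n + 2) b u i = bc (n + 1) v u' i := by
  unfold bc
  rcases Nat.eq_zero_or_pos i with h0 | h0
  · subst h0; simp
  · rw [dif_pos ⟨h0, by omega⟩]
    rcases Nat.lt_or_ge i (n + 1) with h1 | h1
    · rw [dif_pos ⟨h0, h1⟩, ← hinit]; rfl
    · rw [dif_neg (by omega), if_neg (by omega), ← hlast]
      congr 1
      ext; simp; omega

lemma measurable_bc (n : ℕ) (i : ℕ) :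
    Measurable (fun z : ℝ × (Fin n → ℝ) => bc (n + 1) z.1 z.2 i) := by
  by_cases h : 0 < i ∧ i < n + 1
  · have e : (fun z : ℝ × (Fin n → ℝ) => bc (n + 1) z.1 z.2 i) =
        fun z => z.2 ⟨i - 1, by omega⟩ := by
      funext z; unfold bc; rw [dif_pos h]
    rw [e]; fun_prop
  · by_cases h0 : i = 0
    · have e : (fun z : ℝ × (Fin n → ℝ) => bc (n + 1) z.1 z.2 i) = fun z => 0 := by
        funext z; unfold bc; rw [dif_neg h, if_pos h0]
      rw [e]; fun_prop
    · have e : (fun z : ℝ × (Fin n → ℝ) => bc (n + 1) z.1 z.2 i) = fun z => z.1 := by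
        funext z; unfold bc; rw [dif_neg h, if_neg h0]
      rw [e]; fun_prop

lemma measurable_chain_weight {ψ d : ℝ → ℝ} (hψ : Continuous ψ) (hd : Continuous d) (n : ℕ) :
    Measurable (fun z : ℝ × (Fin n → ℝ) =>
      Real.exp (-(chainE (fun _ => ψ) (n + 1) z.1 z.2) - d (bc (n + 1) z.1 z.2 1))) := by
  unfold chainE
  have h1 := fun i => measurable_bc n i
  have h2 := hψ.measurable
  have h3 := hd.measurable
  refine Real.measurable_exp.comp (Measurable.sub (Measurable.neg ?_) (h3.comp (h1 1)))
  exact Finset.measurable_fun_sum _ fun i _ => h2.comp ((h1 (i + 1)).sub (h1 i))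

lemma chain_exponent_snoc {ψ d : ℝ → ℝ} {n : ℕ} {b v : ℝ} {u : Fin (n + 1) → ℝ} {u' : Fin n → ℝ}
    (hl : u (Fin.last n) = v) (hi : ∀ j : Fin n, u j.castSucc = u' j) :
    -(chainE (fun _ => ψ) (n + 2) b u) - d (bc (n + 2) b u 1) =
      -(chainE (fun _ => ψ) (n + 1) v u') - d (bc (n + 1) v u' 1) + -ψ (b - v) := by
  have hb1 : bc (n + 2) b u (n + 2) = b := by
    unfold bc; rw [dif_neg (by omega), if_neg (by omega)]
  have hb2 : bc (n + 2) b u (n + 1) = v := by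
    rw [bc_snoc_of_le hl hi le_rfl]
    unfold bc; rw [dif_neg (by omega), if_neg (by omega)]
  have hE : chainE (fun _ => ψ) (n + 2) b u = chainE (fun _ => ψ) (n + 1) v u' + ψ (b - v) := by
    unfold chainE
    rw [Finset.sum_range_succ _ (n + 1), hb1, hb2]
    congr 1
    refine Finset.sum_congr rfl fun i hir => ?_
    have := Finset.mem_range.1 hir
    rw [bc_snoc_of_le hl hi (by omega), bc_snoc_of_le hl hi (by omega)]
  rw [hE, bc_snoc_of_le hl hi (by omega : 1 ≤ n + 1)]
  ring

lemma lintegral_pi_snoc {n : ℕ} {Φ : ℝ × (Fin n → ℝ) → ENNReal} (hΦ : Measurable Φ) :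
    ∫⁻ u : Fin (n + 1) → ℝ, Φ (u (Fin.last n), fun j => u j.castSucc) =
      ∫⁻ v, ∫⁻ u', Φ (v, u') := by
  have hmp := volume_preserving_piFinSuccAbove (fun _ : Fin (n + 1) => ℝ) (Fin.last n)
  rw [← lintegral_prod _ hΦ.aemeasurable]
  refine Eq.trans ?_ (hmp.lintegral_comp hΦ)
  refine lintegral_congr fun u => ?_
  congr 1
  refine Prod.ext rfl (funext fun j => ?_)
  change _ = u ((Fin.last n).succAbove j)
  rw [Fin.succAbove_last]

/-- Integrating out the last free particle: adding a bond is convolution with its weight. -/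
lemma chainZ_succ {ψ d : ℝ → ℝ} (hψ : Continuous ψ) (hd : Continuous d) (n : ℕ) (b : ℝ) :
    chainZ ψ d (n + 1) b = ∫⁻ v, chainZ ψ d n v * ENNReal.ofReal (exp (-ψ (b - v))) := by
  have hw := (measurable_chain_weight hψ hd n).ennreal_ofReal
  have hg : Measurable (fun z : ℝ × (Fin n → ℝ) => ENNReal.ofReal (exp (-ψ (b - z.1)))) := by
    fun_prop
  have key := lintegral_pi_snoc (hw.mul hg)
  have e : ∀ v, chainZ ψ d n v * ENNReal.ofReal (exp (-ψ (b - v))) =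
      ∫⁻ u' : Fin n → ℝ, ENNReal.ofReal
        (Real.exp (-(chainE (fun _ => ψ) (n + 1) v u') - d (bc (n + 1) v u' 1))) *
        ENNReal.ofReal (exp (-ψ (b - v))) := fun v => by
    exact (lintegral_mul_const _ (hw.comp measurable_prodMk_left)).symm
  simp_rw [e]
  refine Eq.trans ?_ key
  unfold chainZ
  refine lintegral_congr fun u => ?_
  rw [Pi.mul_apply, ← ENNReal.ofReal_mul (exp_pos _).le, ← exp_add]
  have := chain_exponent_snoc (ψ := ψ) (d := d) (b := b) (u := u) rfl (fun j => rfl)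
  exact congrArg (fun r => ENNReal.ofReal (exp r)) this

/-- If `q n` is the `(n+1)`-fold convolution power of the bond weight, the defect chain is the
defect weight convolved with it. -/
lemma chainZ_eq_conv {ψ d : ℝ → ℝ} (hψ : Continuous ψ) (hd : Continuous d)
    {q : ℕ → ℝ → ENNReal} (hqm : ∀ n, Measurable (q n))
    (hq0 : ∀ x, q 0 x = ENNReal.ofReal (exp (-ψ x)))
    (hq : ∀ n x, q (n + 1) x = ∫⁻ y, ENNReal.ofReal (exp (-ψ y)) * q n (x - y)) (n : ℕ) (b : ℝ) :
    chainZ ψ d (n + 1) b = ∫⁻ y, ENNReal.ofReal (exp (-ψ y - d y)) * q n (b - y) := by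
  induction n generalizing b with
  | zero =>
    rw [chainZ_succ hψ hd]
    refine lintegral_congr fun v => ?_
    rw [chainZ_zero, hq0]
  | succ n ih =>
    have hqn := hqm n
    rw [chainZ_succ hψ hd]
    simp_rw [ih]
    have e1 : ∀ v, (∫⁻ y, ENNReal.ofReal (exp (-ψ y - d y)) * q n (v - y)) *
        ENNReal.ofReal (exp (-ψ (b - v))) =
        ∫⁻ y, ENNReal.ofReal (exp (-ψ y - d y)) * q n (v - y) *
          ENNReal.ofReal (exp (-ψ (b - v))) := fun v => by
      rw [lintegral_mul_const]; fun_prop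
    simp_rw [e1]
    rw [lintegral_lintegral_swap (Measurable.aemeasurable (by fun_prop))]
    refine lintegral_congr fun y => ?_
    simp_rw [mul_assoc]
    rw [lintegral_const_mul _ (by fun_prop), hq,
      ← lintegral_sub_left_eq_self _ b]
    congr 1
    refine lintegral_congr fun w => ?_
    rw [mul_comm]
    congr 2
    · congr 2; ring_nf
    · ring

lemma measurable_convPow {p : ℝ → ℝ} (hc : Continuous p) (n : ℕ) : Measurable (convPow p n) := by
  induction n with
  | zero => exact hc.measurable
  | succ n ih =>
    simp only [convPow]
    have : StronglyMeasurable (Function.uncurry fun x y : ℝ => p y * convPow p n (x - y)) := by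
      apply Measurable.stronglyMeasurable
      have := hc.measurable
      simp only [Function.uncurry_def]
      fun_prop
    exact this.integral_prod_right.measurable

lemma convPow_nonneg {p : ℝ → ℝ} (hp : ∀ x, 0 < p x) (n : ℕ) (x : ℝ) : 0 ≤ convPow p n x := by
  induction n generalizing x with
  | zero => exact (hp x).le
  | succ n ih => exact integral_nonneg fun y => mul_nonneg (hp y).le (ih _)

/-! ### Tilting and the thermodynamic limit -/

/-- Exponential tilting commutes with convolution: powers of `g` are reweighted, translated powers
of `p x = e^{σ (x + A)} g (x + A) / Z`. -/
lemma tilt_convPow {g p : ℝ → ℝ} {σ A Z : ℝ}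
    (hg : ∀ y, g y = Z * exp (-σ * y) * p (y - A)) (n : ℕ) (x : ℝ) :
    convPow g n x = Z ^ (n + 1) * exp (-σ * x) * convPow p n (x - (n + 1) * A) := by
  induction n generalizing x with
  | zero => simp [convPow, hg]
  | succ n ih =>
    simp only [convPow]
    rw [← integral_sub_right_eq_self (fun y => p y * _) A, ← integral_const_mul]
    congr 1; funext y
    rw [ih, hg]
    have : exp (-σ * x) = exp (-σ * y) * exp (-σ * (x - y)) := by
      rw [← exp_add]; ring_nf
    rw [this, show x - y - (n + 1) * A = x - ((n + 1 : ℕ) + 1) * A - (y - A) by push_cast; ring]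
    ring

/-- The partition function of the chain with defect `d` is a factor not depending on `d` times the
defect integral against the convolution power of the tilted density `p`. In that integral the
exponent `σ (A - y)` is the coarse-grained energy. -/
lemma chain_partition {ψ d p : ℝ → ℝ} (hψ : Continuous ψ) (hd : Continuous d)
    (hc : Continuous p) (hpi : Integrable p) {σ A Z C : ℝ}
    (hg : ∀ y, exp (-ψ y) = Z * exp (-σ * y) * p (y - A))
    (hbd : ∀ n x, |convPow p n x| ≤ C) (n : ℕ) :
    (∫ u : Fin (n + 2 - 1) → ℝ, exp (-(chainE (fun _ => ψ) (n + 2) ((n + 2 : ℕ) * A) u) -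
        d (bc (n + 2) ((n + 2 : ℕ) * A) u 1))) =
      Z ^ (n + 1) * exp (-σ * ((n + 1) * A)) *
        ∫ y, exp (-d y - ψ y - σ * (A - y)) * convPow p n (A - y) := by
  set g : ℝ → ℝ := fun y => exp (-ψ y) with hgdef
  have htilt := tilt_convPow (g := g) (p := p) hg
  have hgc : Continuous g := by fun_prop
  have hmg := measurable_convPow hgc
  have hmp := measurable_convPow hc
  have hgn := convPow_nonneg (p := g) (fun x => exp_pos _)
  have hrec : ∀ n x, ENNReal.ofReal (convPow g (n + 1) x) =
      ∫⁻ y, ENNReal.ofReal (exp (-ψ y)) * ENNReal.ofReal (convPow g n (x - y)) := by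
    intro n x
    have hi : Integrable (fun y => g y * convPow g n (x - y)) := by
      have h1 : Integrable (fun y => p (y - A)) := hpi.comp_sub_right A
      have h2 := (h1.mul_bdd (c := C)
        (g := fun y => convPow p n (x - y - (n + 1) * A))
        (Measurable.aestronglyMeasurable (by have := hmp n; fun_prop))
        (ae_of_all _ fun y => hbd n _)).const_mul (Z ^ (n + 2) * exp (-σ * x))
      refine h2.congr (ae_of_all _ fun y => ?_)
      dsimp only
      rw [htilt, show g y = Z * exp (-σ * y) * p (y - A) from hg y]
      have : exp (-σ * x) = exp (-σ * y) * exp (-σ * (x - y)) := by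
        rw [← exp_add]; ring_nf
      rw [this]; ring
    simp only [convPow]
    rw [ofReal_integral_eq_lintegral_ofReal hi
      (ae_of_all _ fun y => mul_nonneg (exp_pos _).le (hgn n _))]
    refine lintegral_congr fun y => ?_
    rw [ENNReal.ofReal_mul (exp_pos _).le]
  have hconv := chainZ_eq_conv hψ hd (q := fun n x => ENNReal.ofReal (convPow g n x))
    (fun n => (hmg n).ennreal_ofReal) (fun x => rfl) hrec n ((n + 2 : ℕ) * A)
  have hleft : (∫ u : Fin (n + 2 - 1) → ℝ,
      exp (-(chainE (fun _ => ψ) (n + 2) ((n + 2 : ℕ) * A) u) -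
        d (bc (n + 2) ((n + 2 : ℕ) * A) u 1))) = (chainZ ψ d (n + 1) ((n + 2 : ℕ) * A)).toReal := by
    have hm := (measurable_chain_weight hψ hd (n + 1)).comp
      (measurable_prodMk_left (x := ((n + 2 : ℕ) * A : ℝ)))
    exact integral_eq_lintegral_of_nonneg_ae (ae_of_all _ fun u => (exp_pos _).le)
      hm.aestronglyMeasurable
  rw [hleft, hconv]
  have hright : ∫ y, exp (-ψ y - d y) * convPow g n ((n + 2 : ℕ) * A - y) =
      (∫⁻ y, ENNReal.ofReal (exp (-ψ y - d y)) *
        ENNReal.ofReal (convPow g n ((n + 2 : ℕ) * A - y))).toReal := by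
    rw [integral_eq_lintegral_of_nonneg_ae
      (ae_of_all _ fun y => mul_nonneg (exp_pos _).le (hgn n _))]
    · congr 1
      refine lintegral_congr fun y => ?_
      rw [ENNReal.ofReal_mul (exp_pos _).le]
    · have := hmg n
      have := hψ.measurable
      have := hd.measurable
      exact Measurable.aestronglyMeasurable (by fun_prop)
  rw [← hright, ← integral_const_mul]
  congr 1; funext y
  rw [htilt]
  have h1 : ((n + 2 : ℕ) * A - y - (n + 1) * A : ℝ) = A - y := by push_cast; ring
  have h2 : exp (-ψ y - d y) * exp (-σ * ((n + 2 : ℕ) * A - y)) =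
      exp (-σ * ((n + 1) * A)) * exp (-d y - ψ y - σ * (A - y)) := by
    rw [← exp_add, ← exp_add]; congr 1; push_cast; ring
  rw [h1]
  linear_combination Z ^ (n + 1) * convPow p n (A - y) * h2

/-- The centred tilted density at strain `A` satisfies the hypotheses of the local limit
theorem. -/
lemma exists_tilted_density {ψ : ℝ → ℝ} {κ₁ κ₂ : ℝ} (hψ : ContDiff ℝ 2 ψ) (hκ₁ : 0 < κ₁)
    (hψ'' : ∀ y, κ₁ ≤ deriv (deriv ψ) y ∧ deriv (deriv ψ) y ≤ κ₂) {σ A : ℝ}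
    (hσ : (∫ y, y * exp (-ψ y + σ * y)) = A * ∫ y, exp (-ψ y + σ * y)) :
    ∃ (p : ℝ → ℝ) (Z c : ℝ), 0 < Z ∧ 0 < c ∧ Continuous p ∧ Integrable p ∧ (∀ x, 0 < p x) ∧
      (∫ y, p y = 1) ∧ (∫ y, y * p y = 0) ∧ Integrable (fun y => y ^ 2 * p y) ∧
      (∀ t, ‖ft p t‖ ≤ 1 / (1 + c * t ^ 2)) ∧
      ∀ y, exp (-ψ y) = Z * exp (-σ * y) * p (y - A) := by
  have hcψ := hψ.continuous
  have hd : Differentiable ℝ ψ := hψ.differentiable (by norm_num)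
  have hd1 : ContDiff ℝ 1 (deriv ψ) := ((contDiff_succ_iff_deriv (n := 1)).1 hψ).2.2
  have hd2 : Differentiable ℝ (deriv ψ) := hd1.differentiable (by norm_num)
  have hd3 : Continuous (deriv (deriv ψ)) := hd1.continuous_deriv (by norm_num)
  have hd1c := hd1.continuous
  have hlow := fun y => (hψ'' y).1
  have hκ₂ : 0 < κ₂ := lt_of_lt_of_le hκ₁ ((hψ'' 0).1.trans (hψ'' 0).2)
  -- `w` is the unnormalised, uncentred tilted weight.
  let w : ℝ → ℝ := fun y => exp (-ψ y + σ * y)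
  have hwpos : ∀ y, 0 < w y := fun y => exp_pos _
  have hwc : Continuous w := by fun_prop
  have hwi : Integrable w := integrable_boltzmann hψ hκ₁ hlow σ
  set Z := ∫ y, w y with hZdef
  have hZ : 0 < Z := integral_exp_pos (μ := volume) hwi
  have hquad : ∀ (f : ℝ → ℝ) (C : ℝ), 0 ≤ C → Continuous f → (∀ y, |f y| ≤ C * (1 + y ^ 2)) →
      Integrable (fun y => f y * w y) := by
    intro f C hC hf hb
    refine integrable_of_quad hψ hκ₁ hlow σ C hC (by fun_prop) fun y => ?_
    rw [abs_mul, abs_of_pos (hwpos y)]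
    exact mul_le_mul_of_nonneg_right (hb y) (hwpos y).le
  -- linear growth of `σ - ψ'`
  set a := |σ - deriv ψ 0| with ha
  have hgrow : ∀ y, |σ - deriv ψ y| ≤ a + κ₂ * |y| := by
    intro y
    have h1 : ‖deriv ψ y - deriv ψ 0‖ ≤ κ₂ * ‖y - 0‖ :=
      Convex.norm_image_sub_le_of_norm_deriv_le (f := deriv ψ) (s := Set.univ)
        (fun x _ => hd2 x) (fun x _ => by
          rw [norm_eq_abs, abs_of_pos (hκ₁.trans_le (hψ'' x).1)]; exact (hψ'' x).2)
        convex_univ (Set.mem_univ _) (Set.mem_univ _)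
    rw [sub_zero, norm_eq_abs, norm_eq_abs] at h1
    have h2 : σ - deriv ψ y = (σ - deriv ψ 0) - (deriv ψ y - deriv ψ 0) := by ring
    rw [h2]
    exact (abs_sub _ _).trans (by linarith)
  have ha0 : 0 ≤ a := abs_nonneg _
  let w₁ : ℝ → ℝ := fun y => (σ - deriv ψ y) * w y
  let w₂ : ℝ → ℝ := fun y => (-deriv (deriv ψ) y + (σ - deriv ψ y) ^ 2) * w y
  have hw1 : ∀ y, HasDerivAt w (w₁ y) y := fun y => by
    have := (((hd y).hasDerivAt.neg).add ((hasDerivAt_id y).const_mul σ)).exp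
    refine this.congr_deriv ?_
    simp [w₁, w]; ring
  have hw2 : ∀ y, HasDerivAt w₁ (w₂ y) y := fun y => by
    have := ((hd2 y).hasDerivAt.const_sub σ).mul (hw1 y)
    refine this.congr_deriv ?_
    simp only [w₁, w₂]; ring
  have hy : ∀ y : ℝ, |y| ≤ 1 + y ^ 2 := fun y => by
    nlinarith [sq_abs y, sq_nonneg (|y| - 1)]
  have hw1i : Integrable w₁ := by
    refine hquad (fun y => σ - deriv ψ y) (a + κ₂) (by positivity) (by fun_prop) fun y => ?_
    refine (hgrow y).trans ?_
    nlinarith [hy y, mul_le_mul_of_nonneg_left (hy y) hκ₂.le, mul_nonneg ha0 (sq_nonneg y)]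
  have hw2i : Integrable w₂ := by
    refine hquad (fun y => -deriv (deriv ψ) y + (σ - deriv ψ y) ^ 2)
      (κ₂ + 2 * a ^ 2 + 2 * κ₂ ^ 2) (by positivity) (by fun_prop) fun y => ?_
    have h1 : (σ - deriv ψ y) ^ 2 ≤ 2 * a ^ 2 + 2 * κ₂ ^ 2 * y ^ 2 := by
      rw [← sq_abs (σ - deriv ψ y), ← sq_abs y]
      have := pow_le_pow_left₀ (abs_nonneg _) (hgrow y) 2
      nlinarith [sq_nonneg (a - κ₂ * |y|)]
    have h2 := hψ'' y
    have h3 : 0 ≤ (σ - deriv ψ y) ^ 2 := sq_nonneg _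
    have h4 : 0 ≤ κ₂ * y ^ 2 := by positivity
    have h5 : 0 ≤ a ^ 2 * y ^ 2 := by positivity
    have h6 : 0 ≤ κ₂ ^ 2 * y ^ 2 := by positivity
    have h7 : 0 ≤ a ^ 2 := by positivity
    have h8 : 0 ≤ κ₂ ^ 2 := by positivity
    rw [abs_le]
    constructor <;> nlinarith
  let p : ℝ → ℝ := fun x => Z⁻¹ * w (x + A)
  have hppos : ∀ x, 0 < p x := fun x => mul_pos (inv_pos.2 hZ) (hwpos _)
  have hshift : ∀ f : ℝ → ℝ, Integrable f → Integrable (fun x => Z⁻¹ * f (x + A)) := fun f hf =>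
    (hf.comp_add_right A).const_mul _
  have hpi : Integrable p := hshift w hwi
  have hp1 : ∫ x, p x = 1 := by
    simp only [p]
    rw [integral_const_mul, integral_add_right_eq_self w A, ← hZdef, inv_mul_cancel₀ hZ.ne']
  have hyw : Integrable (fun y => y * w y) := by
    refine hquad (fun y => y) 1 zero_le_one continuous_id fun y => ?_
    rw [one_mul]; exact hy y
  have hmean : ∫ x, x * p x = 0 := by
    have h1 : ∀ x, x * p x = Z⁻¹ * ((fun y => y * w y - A * w y) (x + A)) := fun x => by
      simp only [p]; ring
    simp_rw [h1]
    rw [integral_const_mul, integral_add_right_eq_self (fun y => y * w y - A * w y) A,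
      integral_sub hyw (hwi.const_mul A), integral_const_mul]
    have : ∫ y, y * w y = A * ∫ y, w y := hσ
    rw [this]; ring
  have hvar : Integrable (fun x => x ^ 2 * p x) := by
    have h1 : Integrable (fun y => (y - A) ^ 2 * w y) := by
      refine hquad (fun y => (y - A) ^ 2) (2 * (1 + A ^ 2)) (by positivity) (by fun_prop) fun y => ?_
      rw [abs_of_nonneg (sq_nonneg _)]
      nlinarith [sq_nonneg (y + A), sq_nonneg (A * y)]
    refine (hshift _ h1).congr (ae_of_all _ fun x => ?_)
    simp only [p]; ring
  -- Gaussian minorant, from the upper bound on `ψ''`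
  have hmin : ∃ ε > 0, ∀ x, ε * exp (-κ₂ * x ^ 2) ≤ p x := by
    set B := σ - deriv ψ 0
    set D := -ψ 0 - κ₂ / 2 * A ^ 2 + B * A
    set E := B - κ₂ * A
    refine ⟨Z⁻¹ * exp (D - E ^ 2 / (2 * κ₂)), by positivity, fun x => ?_⟩
    simp only [p]
    rw [mul_assoc, ← exp_add]
    refine mul_le_mul_of_nonneg_left (exp_le_exp.2 ?_) (by positivity)
    have h1 := quad_upper hψ (fun y => (hψ'' y).2) (x + A)
    have h2 : κ₂ / 2 * x ^ 2 + E * x + E ^ 2 / (2 * κ₂) = (κ₂ * x + E) ^ 2 / (2 * κ₂) := by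
      field_simp; ring
    have h3 : 0 ≤ (κ₂ * x + E) ^ 2 / (2 * κ₂) := by positivity
    have h4 : -(ψ 0 + deriv ψ 0 * (x + A) + κ₂ / 2 * (x + A) ^ 2) + σ * (x + A) =
        D - κ₂ / 2 * x ^ 2 + E * x := by simp only [D, E, B]; ring
    linarith
  obtain ⟨ε, hε, hmin⟩ := hmin
  obtain ⟨δ, hδ, b, hb, hft⟩ := ft_le_of_gaussian_minorant hpi hp1 hε hκ₂ hmin
  have hdec := ft_decay (p := p) (p₁ := fun x => Z⁻¹ * w₁ (x + A)) (p₂ := fun x => Z⁻¹ * w₂ (x + A))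
    (fun x => ((hw1 (x + A)).comp_add_const x A).const_mul _)
    (fun x => ((hw2 (x + A)).comp_add_const x A).const_mul _) hpi (hshift _ hw1i) (hshift _ hw2i)
  obtain ⟨c, hc, hbound⟩ := ft_le_inv (f := fun t => ‖ft p t‖) hδ hb hdec hft
  refine ⟨p, Z, c, hZ, hc, by fun_prop, hpi, hppos, hp1, hmean, hvar, hbound, fun y => ?_⟩
  simp only [p, w, sub_add_cancel]
  have : exp (-ψ y) = exp (-σ * y) * exp (-ψ y + σ * y) := by rw [← exp_add]; ring_nf
  rw [this]
  field_simp

/-- The local limit is independent of position, so in the defect integral the rescaled convolution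
power may be replaced by the constant `K`. -/
lemma tendsto_defect_integral {p r : ℝ → ℝ} (hc : Continuous p) (hr : Integrable r) {K C A : ℝ}
    (hlim : ∀ x, Tendsto (fun n : ℕ => √(n + 1 : ℕ) * convPow p n x) atTop (nhds K))
    (hbd : ∀ n x, |√(n + 1 : ℕ) * convPow p n x| ≤ C) :
    Tendsto (fun n : ℕ => √(n + 1 : ℕ) * ∫ y, r y * convPow p n (A - y)) atTop
      (nhds (K * ∫ y, r y)) := by
  have e : ∀ n : ℕ, √(n + 1 : ℕ) * ∫ y, r y * convPow p n (A - y) =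
      ∫ y, r y * (√(n + 1 : ℕ) * convPow p n (A - y)) := fun n => by
    rw [← integral_const_mul]; congr 1; funext y; ring
  simp_rw [e]
  rw [mul_comm K, ← integral_mul_const]
  refine tendsto_integral_of_dominated_convergence (fun y => |r y| * C) (fun n => ?_)
    (hr.abs.mul_const C) (fun n => ae_of_all _ fun y => ?_) (ae_of_all _ fun y => ?_)
  · refine hr.aestronglyMeasurable.mul (Measurable.aestronglyMeasurable ?_)
    have := measurable_convPow hc n
    fun_prop
  · rw [norm_mul]
    exact mul_le_mul_of_nonneg_left (hbd n _) (abs_nonneg _)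
  · exact (hlim (A - y)).const_mul (r y)

/-- representation of the thermodynamic limit `G_∞(A)` in terms of the
coarse-grained energy `E^cg(A,y) = W'(A)(A-y)`. -/
theorem thermodynamic_limit_coarse_grained_representation
    (ψ P : ℝ → ℝ) (κ₁ κ₂ ς₁ ς₂ : ℝ)
    (hψ : ContDiff ℝ 2 ψ) (hP : ContDiff ℝ 2 P)
    (hκ₁ : 0 < κ₁) (hκ : κ₁ ≤ κ₂) (hς₁ : 0 < ς₁) (hς : ς₁ ≤ ς₂)
    (hψ'' : ∀ y : ℝ, κ₁ ≤ deriv (deriv ψ) y ∧ deriv (deriv ψ) y ≤ κ₂)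
    (hψP'' : ∀ y : ℝ, ς₁ ≤ deriv (deriv (fun z => ψ z + P z)) y ∧
        deriv (deriv (fun z => ψ z + P z)) y ≤ ς₂)
    (A : ℝ) :
    Tendsto
      (fun N : ℕ => freeEnergy (fun _ => ψ) P N A - freeEnergy (fun _ => ψ) (fun _ => 0) N A)
      atTop
      (nhds (- Real.log
        ((∫ y : ℝ, Real.exp (-P y - ψ y - deriv (W ψ) A * (A - y))) /
         (∫ y : ℝ, Real.exp (-ψ y - deriv (W ψ) A * (A - y)))))) := by
  obtain ⟨σ, hWσ, hσ⟩ := hasDerivAt_W hψ hκ₁ (fun y => (hψ'' y).1) A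
  rw [hWσ.deriv]
  obtain ⟨p, Z, c, hZ, hc, hpc, hpi, hpos, hp1, hmean, hvar, hft, hg⟩ :=
    exists_tilted_density hψ hκ₁ hψ'' hσ
  obtain ⟨K, hK, C, hlim, hbd⟩ := local_limit hpc hpi hpos hp1 hmean hvar hc hft
  have hsq : ∀ n : ℕ, 1 ≤ √(n + 1 : ℕ) := fun n => by
    rw [one_le_sqrt]; push_cast; linarith [Nat.cast_nonneg (α := ℝ) n]
  have hbd' : ∀ n x, |convPow p n x| ≤ C := fun n x => by
    refine le_trans ?_ (hbd n x)
    rw [abs_mul, abs_of_nonneg (sqrt_nonneg _)]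
    exact le_mul_of_one_le_left (abs_nonneg _) (hsq n)
  have hcψ := hψ.continuous
  have hcP := hP.continuous
  have hiP : Integrable (fun y => exp (-P y - ψ y - σ * (A - y))) := by
    have := (integrable_boltzmann (hψ.add hP) hς₁ (fun y => (hψP'' y).1) σ).mul_const
      (exp (-σ * A))
    refine this.congr (ae_of_all _ fun y => ?_)
    dsimp only [Pi.add_apply]
    rw [← exp_add]; congr 1; ring
  have hi0 : Integrable (fun y => exp (-(0 : ℝ) - ψ y - σ * (A - y))) := by
    have := (integrable_boltzmann hψ hκ₁ (fun y => (hψ'' y).1) σ).mul_const (exp (-σ * A))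
    refine this.congr (ae_of_all _ fun y => ?_)
    dsimp only
    rw [← exp_add]; congr 1; ring
  have htP := tendsto_defect_integral (A := A) hpc hiP hlim hbd
  have ht0 := tendsto_defect_integral (A := A) hpc hi0 hlim hbd
  have hIP : 0 < ∫ y, exp (-P y - ψ y - σ * (A - y)) := integral_exp_pos (μ := volume) hiP
  have hI0 : 0 < ∫ y, exp (-(0 : ℝ) - ψ y - σ * (A - y)) := integral_exp_pos (μ := volume) hi0
  have hlog := ((htP.log (mul_pos hK hIP).ne').sub (ht0.log (mul_pos hK hI0).ne')).neg
  have hval : -(Real.log (K * ∫ y, exp (-P y - ψ y - σ * (A - y))) -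
      Real.log (K * ∫ y, exp (-(0 : ℝ) - ψ y - σ * (A - y)))) =
      -Real.log ((∫ y, exp (-P y - ψ y - σ * (A - y))) / ∫ y, exp (-ψ y - σ * (A - y))) := by
    simp only [neg_zero, zero_sub] at hI0 ⊢
    rw [Real.log_mul hK.ne' hIP.ne', Real.log_mul hK.ne' hI0.ne', Real.log_div hIP.ne' hI0.ne']
    ring
  rw [hval] at hlog
  refine (tendsto_add_atTop_iff_nat 2).1 (hlog.congr' ?_)
  filter_upwards [htP.eventually_const_lt (mul_pos hK hIP),
    ht0.eventually_const_lt (mul_pos hK hI0)] with n hnP hn0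
  unfold freeEnergy
  rw [chain_partition hcψ hcP hpc hpi hg hbd' n,
    chain_partition hcψ (d := fun _ => 0) continuous_const hpc hpi hg hbd' n]
  have hs : 0 < √(n + 1 : ℕ) := by linarith [hsq n]
  have hnP' := (pos_iff_pos_of_mul_pos hnP).1 hs
  have hn0' := (pos_iff_pos_of_mul_pos hn0).1 hs
  have hcn : Z ^ (n + 1) * exp (-σ * ((n + 1) * A)) ≠ 0 := by positivity
  rw [Real.log_mul hs.ne' hnP'.ne', Real.log_mul hs.ne' hn0'.ne', Real.log_mul hcn hnP'.ne',
    Real.log_mul hcn hn0'.ne']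
  ring
end
end

section
/- For all A, y ∈ ℝ the limit E^cg(A,y) = lim_{N→∞} E_N^cg(A,y) exists and equals (A − y)·W'(A) + A·H + inf{ J_∞(A;v) : v' ∈ ℓ² }, where J_∞(A;v) = ∑_{i=2}^∞ [ W(A + v'_i) − W(A) − W'(A)·v'_i + h_i·v'_i ]; moreover there is a constant C > 0 such that for all N ≥ 2, |E_N^cg(A,y) − E^cg(A,y)| ≤ C·( N^{−1} + |A|·|∑_{i=N+1}^∞ h_i| + ∑_{i=N+1}^∞ h_i² ). -/
/-!
The force enters only linearly and the strain energy is uniformly convex, so both minimisation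
problems can be solved almost explicitly.

*Strain energy.* `W` is the Legendre transform of the logarithmic partition function `Λ`, the
cumulant generating function of the Gibbs measure `exp (-ψ)`. An integration by parts shows
`1 / κ₂ ≤ Λ'' ≤ 1 / κ₁` (`deriv2_cgf_gibbs`), and duality turns this into quadratic bounds
for `W` from both sides around every point `Λ' σ`, with slope `σ` (`W_quadratic`).

*Rate.* Write the increments as `A + v j`. Up to the affine terms `(A - y) W'(A) + A ∑ h`, the
energy is a sum of one-bond energies `e j (v j)`, each minimised at an explicit `w j` with
`|w j| ≤ C |h (j + 2)|`, so that `infJinf` equals `∑ e j (w j)`. For a finite chain the only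
coupling is the constraint `∑ v j = A - y`. Dropping it gives the lower bound; the competitor
`w j + t` with `t = O(1 / N)` gives the upper bound, with an error `O(N t²)` and the tail of
`∑ e j (w j)`, which is `O(∑ h²)` (`rate_of_quadratic`).
-/

noncomputable section

open MeasureTheory Real Filter

/-- The finite-domain coarse-grained energy with external forces:
`E_N^cg(A,y) = inf { ∑_{i=2}^N [Wf(u_i - u_{i-1}) - Wf(A) + h_i (u_i - u_{i-1})] :
u₁ = y, u_N = N A }`. -/
def EcgNF (Wf : ℝ → ℝ) (h : ℕ → ℝ) (N : ℕ) (A y : ℝ) : ℝ :=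
  sInf { E : ℝ | ∃ u : ℕ → ℝ, u 1 = y ∧ u N = N * A ∧
    E = ∑ i ∈ Finset.Icc 2 N,
      (Wf (u i - u (i - 1)) - Wf A + h i * (u i - u (i - 1))) }

/-- `inf { J_∞(A;v) : v' ∈ ℓ² }`, where
`J_∞(A;v) = ∑_{i=2}^∞ [W(A + v'_i) - W(A) - W'(A) v'_i + h_i v'_i]`
(the sequence `v i` below stands for the increments `v'_{i+2}`). -/
def infJinf (Wf : ℝ → ℝ) (h : ℕ → ℝ) (A : ℝ) : ℝ :=
  sInf { E : ℝ | ∃ v : ℕ → ℝ, Summable (fun i => (v i) ^ 2) ∧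
    E = ∑' i : ℕ, (Wf (A + v i) - Wf A - deriv Wf A * v i + h (i + 2) * v i) }

/-! ### Calculus on the line -/

/-- Second-order Taylor bound from below. -/
lemma taylor_lower {f : ℝ → ℝ} (hf : Differentiable ℝ f) (hf' : Differentiable ℝ (deriv f))
    {a : ℝ} (ha : ∀ x, a ≤ deriv (deriv f) x) (x y : ℝ) :
    f x + deriv f x * (y - x) + a / 2 * (y - x) ^ 2 ≤ f y := by
  set g : ℝ → ℝ := fun z => f z - deriv f x * (z - x) - a / 2 * (z - x) ^ 2 with hg
  have hgd : ∀ z, HasDerivAt g (deriv f z - deriv f x - a * (z - x)) z := by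
    intro z
    have h1 := ((hf z).hasDerivAt.sub (((hasDerivAt_id z).sub_const x).const_mul (deriv f x))).sub
      ((((hasDerivAt_id z).sub_const x).pow 2).const_mul (a / 2))
    refine h1.congr_deriv ?_
    simp
    ring
  have hgc : Continuous g := continuous_iff_continuousAt.2 fun z => (hgd z).continuousAt
  have key := mul_sub_le_image_sub_of_le_deriv hf' ha
  have hgx : g x = f x := by simp [hg]
  suffices g x ≤ g y by
    rw [hgx] at this
    simp only [hg] at this
    linarith
  rcases lt_trichotomy x y with hxy | hxy | hxy
  · obtain ⟨c, hc, he⟩ := exists_hasDerivAt_eq_slope g _ hxy hgc.continuousOn fun z _ => hgd z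
    have h2 := key hc.1.le
    rw [eq_div_iff (by linarith)] at he
    nlinarith [hc.1, hc.2]
  · rw [hxy]
  · obtain ⟨c, hc, he⟩ := exists_hasDerivAt_eq_slope g _ hxy hgc.continuousOn fun z _ => hgd z
    have h2 := key hc.2.le
    rw [eq_div_iff (by linarith)] at he
    nlinarith [hc.1, hc.2]

lemma taylor_upper {f : ℝ → ℝ} (hf : Differentiable ℝ f) (hf' : Differentiable ℝ (deriv f))
    {b : ℝ} (hb : ∀ x, deriv (deriv f) x ≤ b) (x y : ℝ) :
    f y ≤ f x + deriv f x * (y - x) + b / 2 * (y - x) ^ 2 := by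
  have hd : deriv (fun z => -f z) = fun z => -deriv f z := by
    funext z
    exact deriv.fun_neg
  have h1 := taylor_lower (f := fun z => -f z) (a := -b) hf.neg (by rw [hd]; exact hf'.neg)
    (by
      intro z
      rw [hd, deriv.fun_neg]
      linarith [hb z]) x y
  rw [hd] at h1
  simp only at h1
  linarith

lemma surjective_of_deriv_ge {f : ℝ → ℝ} (hf : Differentiable ℝ f) {a : ℝ} (ha : 0 < a)
    (h : ∀ x, a ≤ deriv f x) : Function.Surjective f := by
  have key := mul_sub_le_image_sub_of_le_deriv hf h
  refine hf.continuous.surjective ?_ ?_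
  · refine tendsto_atTop_mono' (f₁ := fun x => a * x + f 0) _ ?_ ?_
    · filter_upwards [eventually_ge_atTop 0] with x hx
      linarith [key hx]
    · exact tendsto_atTop_add_const_right _ _ (tendsto_id.const_mul_atTop ha)
  · refine tendsto_atBot_mono' (f₁ := fun x => a * x + f 0) atBot ?_ ?_
    · filter_upwards [eventually_le_atBot 0] with x hx
      linarith [key hx]
    · exact tendsto_atBot_add_const_right _ _ (tendsto_id.const_mul_atBot ha)

/-! ### The Gibbs measure and its cumulant generating function -/

/-- The Gibbs measure with density `exp (-ψ)` with respect to Lebesgue measure, not normalised. -/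
def gibbs (ψ : ℝ → ℝ) : Measure ℝ :=
  volume.withDensity fun y => ((exp (-ψ y)).toNNReal : ENNReal)

lemma integral_gibbs {ψ : ℝ → ℝ} (hψ : Continuous ψ) (f : ℝ → ℝ) :
    ∫ y, f y ∂gibbs ψ = ∫ y, exp (-ψ y) * f y := by
  have hm : Measurable fun y => (exp (-ψ y)).toNNReal := by fun_prop
  rw [gibbs, integral_withDensity_eq_integral_smul hm]
  simp only [NNReal.smul_def, coe_toNNReal _ (exp_pos _).le, smul_eq_mul]

lemma integrable_gibbs {ψ : ℝ → ℝ} (hψ : Continuous ψ) (f : ℝ → ℝ) :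
    Integrable f (gibbs ψ) ↔ Integrable fun y => exp (-ψ y) * f y := by
  have hm : Measurable fun y => (exp (-ψ y)).toNNReal := by fun_prop
  rw [gibbs, integrable_withDensity_iff_integrable_smul hm]
  simp only [NNReal.smul_def, coe_toNNReal _ (exp_pos _).le, smul_eq_mul]

lemma gibbs_integrableExpSet {ψ : ℝ → ℝ} {κ₁ : ℝ} (hψ : ContDiff ℝ 2 ψ) (hκ₁ : 0 < κ₁)
    (h1 : ∀ y : ℝ, κ₁ ≤ deriv (deriv ψ) y) :
    ProbabilityTheory.integrableExpSet id (gibbs ψ) = Set.univ := by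
  have hd : Differentiable ℝ ψ := hψ.differentiable (by norm_num)
  have hd' : Differentiable ℝ (deriv ψ) := hψ.differentiable_deriv_two
  refine Set.eq_univ_of_forall fun σ => ?_
  change Integrable (fun y : ℝ => exp (σ * y)) (gibbs ψ)
  rw [integrable_gibbs hψ.continuous]
  set s := σ - deriv ψ 0 with hs
  have hc := hψ.continuous
  refine ((integrable_exp_neg_mul_sq (b := κ₁ / 4) (by positivity)).const_mul
    (exp (s ^ 2 / κ₁ - ψ 0))).mono' (by fun_prop) (ae_of_all _ fun y => ?_)
  rw [norm_of_nonneg (by positivity), ← exp_add, ← exp_add]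
  refine exp_le_exp.2 ?_
  have h2 := taylor_lower hd hd' h1 0 y
  -- completing the square absorbs the linear term into half of the quadratic one
  have h3 : s * y ≤ κ₁ / 4 * y ^ 2 + s ^ 2 / κ₁ := by
    have : κ₁ / 4 * y ^ 2 + s ^ 2 / κ₁ - s * y = (κ₁ * y / 2 - s) ^ 2 / κ₁ := by
      field_simp
      ring
    have : 0 ≤ (κ₁ * y / 2 - s) ^ 2 / κ₁ := by positivity
    linarith
  have h4 : σ * y = s * y + deriv ψ 0 * y := by rw [hs]; ring
  simp only [sub_zero] at h2
  linarith

/-- The logarithmic partition function is uniformly convex with bounded second derivative.  With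
`c` the mean of the tilted Gibbs measure, integration by parts gives
`E[(ψ' y - ψ' c) (y - c)] = 1`, and the integrand lies between `κ₁ (y - c)²` and `κ₂ (y - c)²`, so
the variance lies between `1 / κ₂` and `1 / κ₁`. -/
lemma deriv2_cgf_gibbs {ψ : ℝ → ℝ} {κ₁ κ₂ : ℝ} (hψ : ContDiff ℝ 2 ψ) (hκ₁ : 0 < κ₁)
    (hκ : κ₁ ≤ κ₂) (h1 : ∀ y : ℝ, κ₁ ≤ deriv (deriv ψ) y)
    (h2 : ∀ y : ℝ, deriv (deriv ψ) y ≤ κ₂) (σ : ℝ) :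
    κ₂⁻¹ ≤ deriv (deriv (ProbabilityTheory.cgf id (gibbs ψ))) σ ∧
      deriv (deriv (ProbabilityTheory.cgf id (gibbs ψ))) σ ≤ κ₁⁻¹ := by
  have hd : Differentiable ℝ ψ := hψ.differentiable (by norm_num)
  have hd' : Differentiable ℝ (deriv ψ) := hψ.differentiable_deriv_two
  have hcont := hψ.continuous
  have hcont' : Continuous (deriv ψ) := hd'.continuous
  have huniv := gibbs_integrableExpSet hψ hκ₁ h1
  have hmem : σ ∈ interior (ProbabilityTheory.integrableExpSet id (gibbs ψ)) := by
    rw [huniv]; simp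
  have hκ₂ : 0 < κ₂ := hκ₁.trans_le hκ
  have hmoment : ∀ n : ℕ, Integrable fun y : ℝ => exp (-ψ y) * (y ^ n * exp (σ * y)) := fun n =>
    (integrable_gibbs hcont _).1
      (ProbabilityTheory.integrable_pow_mul_exp_of_mem_interior_integrableExpSet hmem n)
  rw [show deriv (deriv (ProbabilityTheory.cgf id (gibbs ψ))) σ =
    iteratedDeriv 2 (ProbabilityTheory.cgf id (gibbs ψ)) σ by
      rw [iteratedDeriv_succ, iteratedDeriv_one],
    ProbabilityTheory.iteratedDeriv_two_cgf_eq_integral hmem]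
  have hc := ProbabilityTheory.deriv_cgf hmem
  set c := deriv (ProbabilityTheory.cgf id (gibbs ψ)) σ
  simp only [ProbabilityTheory.mgf, id] at hc ⊢
  rw [integral_gibbs hcont, integral_gibbs hcont] at hc
  rw [integral_gibbs hcont, integral_gibbs hcont]
  set ρ : ℝ → ℝ := fun y => exp (-ψ y) * exp (σ * y) with hρ
  have hρpos : ∀ y, 0 < ρ y := fun y => by positivity
  have i0 : Integrable ρ := by simpa using hmoment 0
  have i1 : Integrable fun y => y * ρ y := (hmoment 1).congr (ae_of_all _ fun y => by
    simp [hρ]; ring)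
  have i2 : Integrable fun y => (y - c) ^ 2 * ρ y := by
    refine (((hmoment 2).sub (i1.const_mul (2 * c))).add (i0.const_mul (c ^ 2))).congr
      (ae_of_all _ fun y => ?_)
    simp [hρ]
    ring
  have ic : Integrable fun y => (y - c) * ρ y := by
    refine (i1.sub (i0.const_mul c)).congr (ae_of_all _ fun y => ?_)
    simp
    ring
  have hρc : Continuous ρ := by fun_prop
  have hZ : 0 < ∫ y, ρ y := by
    rw [integral_pos_iff_support_of_nonneg (fun y => (hρpos y).le) i0]
    have : Function.support ρ = Set.univ := by
      ext y; simp [(hρpos y).ne']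
    simp [this]
  have hmean : ∫ y, (y - c) * ρ y = 0 := by
    have e1 : ∫ y, (y - c) * ρ y = (∫ y, y * ρ y) - c * ∫ y, ρ y := by
      rw [← integral_const_mul, ← integral_sub i1 (i0.const_mul c)]
      congr 1; ext y; ring
    have e2 : ∫ y, y * ρ y = ∫ y, exp (-ψ y) * (y * exp (σ * y)) := by
      congr 1; ext y; simp [hρ]; ring
    rw [e1, e2, hc, div_mul_cancel₀ _ hZ.ne', sub_self]
  -- the integrand of the integration by parts identity
  set q : ℝ → ℝ := fun y => (deriv ψ y - deriv ψ c) * (y - c) with hq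
  have hqc : Continuous q := by fun_prop
  have hqb : ∀ y, κ₁ * (y - c) ^ 2 ≤ q y ∧ q y ≤ κ₂ * (y - c) ^ 2 := by
    intro y
    have k1 := mul_sub_le_image_sub_of_le_deriv hd' h1
    have k2 := image_sub_le_mul_sub_of_deriv_le hd' h2
    simp only [hq]
    rcases le_total c y with hy | hy
    · constructor <;> nlinarith [k1 hy, k2 hy]
    · constructor <;> nlinarith [k1 hy, k2 hy]
  have iq : Integrable fun y => q y * ρ y := by
    refine (i2.const_mul κ₂).mono' (by fun_prop) (ae_of_all _ fun y => ?_)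
    have hq0 : 0 ≤ q y := le_trans (by positivity) (hqb y).1
    rw [norm_of_nonneg (mul_nonneg hq0 (hρpos y).le), ← mul_assoc κ₂]
    exact mul_le_mul_of_nonneg_right (hqb y).2 (hρpos y).le
  have hparts : ∫ y, q y * ρ y = ∫ y, ρ y := by
    have hder : ∀ y, HasDerivAt (fun y => (y - c) * ρ y)
        (ρ y - q y * ρ y + (σ - deriv ψ c) * ((y - c) * ρ y)) y := by
      intro y
      have hρd := ((hd y).hasDerivAt.neg.exp).mul (((hasDerivAt_id y).const_mul σ).exp)
      refine (((hasDerivAt_id y).sub_const c).mul hρd).congr_deriv ?_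
      simp [hρ, hq]
      ring
    have h0 := integral_eq_zero_of_hasDerivAt_of_integrable hder
      ((i0.sub iq).add (ic.const_mul _)) ic
    rw [integral_add (f := fun y => ρ y - q y * ρ y) (i0.sub iq) (ic.const_mul _), integral_sub i0 iq, integral_const_mul,
      hmean] at h0
    linarith
  have hV : ∫ y, exp (-ψ y) * ((y - c) ^ 2 * exp (σ * y)) = ∫ y, (y - c) ^ 2 * ρ y := by
    congr 1; ext y; simp [hρ]; ring
  rw [hV]
  have b1 : κ₁ * ∫ y, (y - c) ^ 2 * ρ y ≤ ∫ y, ρ y := by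
    rw [← hparts, ← integral_const_mul]
    refine integral_mono (i2.const_mul _) iq fun y => ?_
    have := mul_le_mul_of_nonneg_right (hqb y).1 (hρpos y).le
    simpa [mul_assoc] using this
  have b2 : ∫ y, ρ y ≤ κ₂ * ∫ y, (y - c) ^ 2 * ρ y := by
    rw [← hparts, ← integral_const_mul]
    refine integral_mono iq (i2.const_mul _) fun y => ?_
    have := mul_le_mul_of_nonneg_right (hqb y).2 (hρpos y).le
    simpa [mul_assoc] using this
  constructor
  · rw [le_div_iff₀ hZ, inv_mul_le_iff₀ hκ₂]
    exact b2
  · rw [div_le_iff₀ hZ, ← div_eq_inv_mul, le_div_iff₀ hκ₁]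
    linarith

/-! ### Quadratic bounds for the strain energy -/

/-- Two-sided quadratic bounds for `W`, by Legendre duality: `m` is the derivative of the
logarithmic partition function, and `σ` is the slope of `W` at `m σ`. -/
lemma W_quadratic {ψ : ℝ → ℝ} {κ₁ κ₂ : ℝ} (hψ : ContDiff ℝ 2 ψ) (hκ₁ : 0 < κ₁)
    (hκ : κ₁ ≤ κ₂) (h1 : ∀ y : ℝ, κ₁ ≤ deriv (deriv ψ) y)
    (h2 : ∀ y : ℝ, deriv (deriv ψ) y ≤ κ₂) :
    ∃ m : ℝ → ℝ, Function.Surjective m ∧ ∀ σ t : ℝ,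
      W ψ (m σ) + σ * t + κ₁ / 2 * t ^ 2 ≤ W ψ (m σ + t) ∧
      W ψ (m σ + t) ≤ W ψ (m σ) + σ * t + κ₂ / 2 * t ^ 2 := by
  set Λ : ℝ → ℝ := ProbabilityTheory.cgf id (gibbs ψ) with hΛ
  have hκ₂ : 0 < κ₂ := hκ₁.trans_le hκ
  have han : ∀ σ, AnalyticAt ℝ Λ σ := fun σ =>
    ProbabilityTheory.analyticAt_cgf (by rw [gibbs_integrableExpSet hψ hκ₁ h1]; simp)
  have hd : Differentiable ℝ Λ := fun σ => (han σ).differentiableAt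
  have hd' : Differentiable ℝ (deriv Λ) := fun σ => (han σ).deriv.differentiableAt
  have hb := deriv2_cgf_gibbs hψ hκ₁ hκ h1 h2
  have hW : ∀ x, W ψ x = ⨆ σ : ℝ, (σ * x - Λ σ) := by
    intro x
    unfold W
    congr 1
    ext σ
    rw [hΛ, ProbabilityTheory.cgf, ProbabilityTheory.mgf, integral_gibbs hψ.continuous]
    simp only [id, exp_add]
  have hlow := taylor_lower hd hd' fun σ => (hb σ).1
  have hupp := taylor_upper hd hd' fun σ => (hb σ).2
  have hub : ∀ σ t τ, τ * (deriv Λ σ + t) - Λ τ ≤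
      σ * deriv Λ σ - Λ σ + σ * t + κ₂ / 2 * t ^ 2 := by
    intro σ t τ
    have := hlow σ τ
    have h3 : (τ - σ) * t ≤ κ₂⁻¹ / 2 * (τ - σ) ^ 2 + κ₂ / 2 * t ^ 2 := by
      have e : κ₂⁻¹ / 2 * (τ - σ) ^ 2 + κ₂ / 2 * t ^ 2 - (τ - σ) * t =
          κ₂⁻¹ / 2 * (τ - σ - κ₂ * t) ^ 2 := by
        field_simp
        ring
      have : 0 ≤ κ₂⁻¹ / 2 * (τ - σ - κ₂ * t) ^ 2 := by positivity
      linarith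
    linarith
  have hbdd : ∀ σ t, BddAbove (Set.range fun τ => τ * (deriv Λ σ + t) - Λ τ) := fun σ t =>
    ⟨_, by rintro _ ⟨τ, rfl⟩; exact hub σ t τ⟩
  have hWm : ∀ σ, W ψ (deriv Λ σ) = σ * deriv Λ σ - Λ σ := by
    intro σ
    rw [hW]
    apply le_antisymm
    · exact ciSup_le fun τ => by simpa using hub σ 0 τ
    · exact le_ciSup (f := fun τ => τ * deriv Λ σ - Λ τ) (by simpa using hbdd σ 0) σ
  refine ⟨deriv Λ, surjective_of_deriv_ge hd' (inv_pos.2 hκ₂) fun σ => (hb σ).1, fun σ t => ?_⟩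
  rw [hWm, hW]
  refine ⟨?_, ciSup_le fun τ => hub σ t τ⟩
  -- `σ + κ₁ t` maximises the lower bound obtained from the upper Taylor estimate for `Λ`
  refine le_trans ?_ (le_ciSup (hbdd σ t) (σ + κ₁ * t))
  have := hupp σ (σ + κ₁ * t)
  have e : κ₁⁻¹ / 2 * (σ + κ₁ * t - σ) ^ 2 = κ₁ / 2 * t ^ 2 := by
    field_simp
    ring
  rw [e] at this
  linarith

/-- A function squeezed between two parabolas touching at `x` with slope `σ` has derivative `σ`. -/
lemma hasDerivAt_of_quadratic {f : ℝ → ℝ} {x σ p q : ℝ} (hp : 0 ≤ p)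
    (hf : ∀ t : ℝ, f x + σ * t + p / 2 * t ^ 2 ≤ f (x + t) ∧
      f (x + t) ≤ f x + σ * t + q / 2 * t ^ 2) : HasDerivAt f σ x := by
  rw [hasDerivAt_iff_isLittleO_nhds_zero]
  refine Asymptotics.IsBigO.trans_isLittleO (g := fun t : ℝ => t ^ 2) ?_ ?_
  · refine Asymptotics.IsBigO.of_bound (q / 2) (Eventually.of_forall fun t => ?_)
    obtain ⟨h1, h2⟩ := hf t
    have : 0 ≤ p / 2 * t ^ 2 := by positivity
    rw [norm_of_nonneg (by simp only [smul_eq_mul]; linarith), norm_of_nonneg (by positivity)]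
    simp only [smul_eq_mul]
    linarith
  · simpa using (Asymptotics.isLittleO_pow_id (𝕜 := ℝ) (n := 2) (by norm_num))

/-! ### Reduction to increments and the rate of convergence -/

/-- The admissible deformations for `N = n + 1` in terms of the `n` increments
`A + v j`, `j < n`: the boundary conditions become `∑ v j = A - y`. -/
lemma EcgNF_eq (Wf : ℝ → ℝ) (h : ℕ → ℝ) (n : ℕ) (A y σ : ℝ) :
    EcgNF Wf h (n + 1) A y = sInf { E : ℝ | ∃ v : ℕ → ℝ, ∑ j ∈ Finset.range n, v j = A - y ∧
      E = (A - y) * σ + A * (∑ j ∈ Finset.range n, h (j + 2)) +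
        ∑ j ∈ Finset.range n, (Wf (A + v j) - Wf A - σ * v j + h (j + 2) * v j) } := by
  have hsum : ∀ f : ℕ → ℝ, ∑ i ∈ Finset.Icc 2 (n + 1), f i =
      ∑ j ∈ Finset.range n, f (j + 2) := by
    intro f
    rw [show Finset.Icc 2 (n + 1) = Finset.Ico 2 (n + 2) by ext; simp; omega,
      Finset.sum_Ico_eq_sum_range]
    simp [add_comm]
  have hexp : ∀ v : ℕ → ℝ, ∑ j ∈ Finset.range n, v j = A - y →
      ∑ j ∈ Finset.range n, (Wf (A + v j) - Wf A + h (j + 2) * (A + v j)) =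
      (A - y) * σ + A * (∑ j ∈ Finset.range n, h (j + 2)) +
        ∑ j ∈ Finset.range n, (Wf (A + v j) - Wf A - σ * v j + h (j + 2) * v j) := by
    intro v hv
    rw [← hv, Finset.sum_mul, Finset.mul_sum, ← Finset.sum_add_distrib, ← Finset.sum_add_distrib]
    refine Finset.sum_congr rfl fun j _ => ?_
    ring
  unfold EcgNF
  congr 1
  ext E
  simp only [Set.mem_ofPred_eq, hsum]
  constructor
  · rintro ⟨u, hu1, huN, rfl⟩
    have hv : ∑ j ∈ Finset.range n, (u (j + 2) - u (j + 1) - A) = A - y := by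
      rw [Finset.sum_sub_distrib, Finset.sum_range_sub (fun j => u (j + 1))]
      simp [hu1, huN]
      ring
    refine ⟨fun j => u (j + 2) - u (j + 1) - A, hv, ?_⟩
    rw [← hexp _ hv]
    refine Finset.sum_congr rfl fun j _ => ?_
    simp
  · rintro ⟨v, hv, rfl⟩
    refine ⟨fun k => y + ∑ j ∈ Finset.range (k - 1), (A + v j), by simp, ?_, ?_⟩
    · simp [Finset.sum_add_distrib, hv]
      ring
    · rw [← hexp _ hv]
      refine Finset.sum_congr rfl fun j _ => ?_
      have : y + ∑ i ∈ Finset.range (j + 2 - 1), (A + v i) -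
          (y + ∑ i ∈ Finset.range (j + 2 - 1 - 1), (A + v i)) = A + v j := by
        simp [Finset.sum_range_succ]
      rw [this]

set_option maxHeartbeats 1000000 in
/-- The rate estimate, using of the strain energy only the two-sided quadratic bounds.
The infimum in `infJinf` decouples over the bonds, the minimal increments are
`w j = m (σ - h (j + 2)) - A = O(|h (j + 2)|)`, and for finite chains the boundary condition is met
by adding the same amount `t = O(1 / N)` to all of them, at a cost of order `N t²`. -/
lemma rate_of_quadratic {Wf m : ℝ → ℝ} {p q : ℝ} (hp : 0 < p) (hq : 0 ≤ q)
    (hm : Function.Surjective m)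
    (hW : ∀ σ t : ℝ, Wf (m σ) + σ * t + p / 2 * t ^ 2 ≤ Wf (m σ + t) ∧
      Wf (m σ + t) ≤ Wf (m σ) + σ * t + q / 2 * t ^ 2)
    {h : ℕ → ℝ} (hh : Summable fun i => |h i|) (A y : ℝ) :
    ∃ C > 0, ∀ N : ℕ, 2 ≤ N →
      |EcgNF Wf h N A y -
        ((A - y) * deriv Wf A + A * (∑' i : ℕ, h (i + 2)) + infJinf Wf h A)| ≤
      C * ((N : ℝ)⁻¹ + |A| * |∑' i : ℕ, h (i + N + 1)| + ∑' i : ℕ, (h (i + N + 1)) ^ 2) := by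
  obtain ⟨σ, rfl⟩ := hm A
  set A := m σ with hA
  have hder : deriv Wf A = σ := (hasDerivAt_of_quadratic hp.le (hW σ)).deriv
  rw [infJinf, hder]
  set e : ℕ → ℝ → ℝ := fun j v => Wf (A + v) - Wf A - σ * v + h (j + 2) * v with he
  set w : ℕ → ℝ := fun j => m (σ - h (j + 2)) - A with hw
  have hshift : Summable fun j => |h (j + 2)| := (summable_nat_add_iff 2).2 hh
  have hh2 : Summable fun i => h i ^ 2 := by
    refine Summable.of_norm_bounded_eventually hh ?_
    filter_upwards [hh.tendsto_cofinite_zero.eventually (gt_mem_nhds one_pos)] with i hi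
    rw [norm_of_nonneg (by positivity), ← sq_abs]
    nlinarith [abs_nonneg (h i)]
  have hshift2 : Summable fun j => h (j + 2) ^ 2 := (summable_nat_add_iff 2).2 hh2
  -- bounds at the minimal increments, where the slope of `Wf` is `σ - h (j + 2)`
  have hwt : ∀ j t, e j (w j) ≤ e j (w j + t) ∧ e j (w j + t) ≤ e j (w j) + q / 2 * t ^ 2 := by
    intro j t
    obtain ⟨h1, h2⟩ := hW (σ - h (j + 2)) t
    have e1 : A + w j = m (σ - h (j + 2)) := by simp [hw]
    have e2 : A + (w j + t) = m (σ - h (j + 2)) + t := by rw [← e1]; ring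
    simp only [he]
    rw [e1, e2]
    have : 0 ≤ p / 2 * t ^ 2 := by positivity
    constructor <;> linarith
  have hmin : ∀ j v, e j (w j) ≤ e j v := by
    intro j v
    have := (hwt j (v - w j)).1
    simpa using this
  have hlow : ∀ j v, p / 2 * v ^ 2 + h (j + 2) * v ≤ e j v := by
    intro j v
    have := (hW σ v).1
    simp only [he]
    linarith
  have hupp : ∀ j v, e j v ≤ q / 2 * v ^ 2 + h (j + 2) * v := by
    intro j v
    have := (hW σ v).2
    simp only [he]
    linarith
  have hneg : ∀ j, e j (w j) ≤ 0 := by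
    intro j
    simpa [he] using hmin j 0
  have hge : ∀ j, -(h (j + 2) ^ 2 / (2 * p)) ≤ e j (w j) := by
    intro j
    refine le_trans ?_ (hlow j (w j))
    have : p / 2 * w j ^ 2 + h (j + 2) * w j + h (j + 2) ^ 2 / (2 * p) =
        (p * w j + h (j + 2)) ^ 2 / (2 * p) := by
      field_simp
      ring
    have : 0 ≤ (p * w j + h (j + 2)) ^ 2 / (2 * p) := by positivity
    linarith
  have hwb : ∀ j, |w j| ≤ 2 / p * |h (j + 2)| := by
    intro j
    have h1 := (hlow j (w j)).trans (hneg j)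
    have h2 : -(|h (j + 2)| * |w j|) ≤ h (j + 2) * w j := by
      rw [← abs_mul]; exact neg_abs_le _
    rw [← sq_abs (w j)] at h1
    rw [div_mul_eq_mul_div, le_div_iff₀ hp]
    rcases (abs_nonneg (w j)).eq_or_lt with h0 | h0
    · rw [← h0]; simp
    · by_contra hcon
      push Not at hcon
      nlinarith
  have hws : Summable fun j => |w j| :=
    (hshift.mul_left (2 / p)).of_nonneg_of_le (fun j => abs_nonneg _) hwb
  have hw2 : Summable fun j => w j ^ 2 := by
    refine (hshift2.mul_left ((2 / p) ^ 2)).of_nonneg_of_le (fun j => sq_nonneg _) fun j => ?_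
    rw [← sq_abs (w j), ← sq_abs (h (j + 2)), ← mul_pow]
    exact pow_le_pow_left₀ (abs_nonneg _) (hwb j) 2
  have hes : ∀ v : ℕ → ℝ, (Summable fun j => v j ^ 2) → Summable fun j => e j (v j) := by
    intro v hv
    refine Summable.of_norm_bounded
      (g := fun j => (q / 2 + 1) * v j ^ 2 + h (j + 2) ^ 2) ((hv.mul_left _).add hshift2) fun j => ?_
    have h1 := hlow j (v j)
    have h2 := hupp j (v j)
    have h3 : 0 ≤ p / 2 * v j ^ 2 := by positivity
    have h4 : 0 ≤ q / 2 * v j ^ 2 := by positivity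
    rw [norm_eq_abs, abs_le]
    constructor <;> nlinarith [sq_nonneg (v j - h (j + 2)), sq_nonneg (v j + h (j + 2))]
  have hφ : Summable fun j => e j (w j) := hes w hw2
  have hinf : sInf { E : ℝ | ∃ v : ℕ → ℝ, Summable (fun i => (v i) ^ 2) ∧
      E = ∑' i : ℕ, e i (v i) } = ∑' j, e j (w j) := by
    refine IsLeast.csInf_eq ⟨⟨w, hw2, rfl⟩, ?_⟩
    rintro _ ⟨v, hv, rfl⟩
    exact hφ.tsum_le_tsum (fun j => hmin j (v j)) (hes v hv)
  change ∃ C > 0, ∀ N : ℕ, 2 ≤ N → |EcgNF Wf h N A y - ((A - y) * σ + A * (∑' i : ℕ, h (i + 2)) +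
    sInf { E : ℝ | ∃ v : ℕ → ℝ, Summable (fun i => (v i) ^ 2) ∧ E = ∑' i : ℕ, e i (v i) })| ≤ _
  rw [hinf]
  set S := |A - y| + ∑' j, |w j| with hS
  have hS0 : 0 ≤ S := add_nonneg (abs_nonneg _) (tsum_nonneg fun j => abs_nonneg _)
  refine ⟨1 + q * S ^ 2 + 1 / (2 * p), by positivity, fun N hN => ?_⟩
  obtain ⟨n, rfl⟩ : ∃ n, N = n + 1 := ⟨N - 1, by omega⟩
  have hn : 1 ≤ n := by omega
  have hn0 : (0 : ℝ) < n := by exact_mod_cast hn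
  rw [EcgNF_eq Wf h n A y σ]
  -- splitting the series at `N`
  have hidx : ∀ i, i + n + 2 = i + (n + 1) + 1 := fun i => by omega
  have hsplit : ∑' i, h (i + 2) = ∑ j ∈ Finset.range n, h (j + 2) + ∑' i, h (i + (n + 1) + 1) := by
    rw [← hshift.of_abs.sum_add_tsum_nat_add n]
    simp only [hidx]
  have hφsplit : ∑' j, e j (w j) =
      ∑ j ∈ Finset.range n, e j (w j) + ∑' i, e (i + n) (w (i + n)) :=
    (hφ.sum_add_tsum_nat_add n).symm
  have hφtail : Summable fun i => e (i + n) (w (i + n)) := (summable_nat_add_iff n).2 hφ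
  have htail0 : ∑' i, e (i + n) (w (i + n)) ≤ 0 := tsum_nonpos fun i => hneg _
  have htailh : Summable fun i => h (i + (n + 1) + 1) ^ 2 := by
    simpa [add_assoc] using (summable_nat_add_iff (n + 2)).2 hh2
  have htail1 : -(1 / (2 * p) * ∑' i, h (i + (n + 1) + 1) ^ 2) ≤
      ∑' i, e (i + n) (w (i + n)) := by
    rw [← tsum_mul_left, ← tsum_neg]
    refine (htailh.mul_left _).neg.tsum_le_tsum (fun i => ?_) hφtail
    have := hge (i + n)
    rw [hidx] at this
    refine le_trans (le_of_eq ?_) this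
    ring
  set T := ∑' i, h (i + (n + 1) + 1)
  set Q := ∑' i, h (i + (n + 1) + 1) ^ 2
  set R := ∑' i, e (i + n) (w (i + n))
  have hQ0 : 0 ≤ Q := tsum_nonneg fun i => sq_nonneg _
  -- the competitor for the finite chain
  set t := (A - y - ∑ j ∈ Finset.range n, w j) / n with ht
  have htS : |t| ≤ S / n := by
    rw [ht, abs_div, abs_of_pos hn0]
    gcongr
    refine (abs_sub _ _).trans ?_
    rw [hS]
    gcongr
    exact (Finset.abs_sum_le_sum_abs _ _).trans (hws.sum_le_tsum _ fun j _ => abs_nonneg _)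
  have hcost : n * (q / 2 * t ^ 2) ≤ q * S ^ 2 * ((n + 1 : ℕ) : ℝ)⁻¹ := by
    have h1 : t ^ 2 ≤ (S / n) ^ 2 := by
      rw [← sq_abs t]
      exact pow_le_pow_left₀ (abs_nonneg _) htS 2
    have h2 : (n : ℝ)⁻¹ ≤ 2 * ((n + 1 : ℕ) : ℝ)⁻¹ := by
      have : (1 : ℝ) ≤ n := by exact_mod_cast hn
      push_cast
      rw [← div_eq_mul_inv, le_div_iff₀ (by positivity), inv_mul_le_iff₀ hn0]
      linarith
    calc n * (q / 2 * t ^ 2) ≤ n * (q / 2 * (S / n) ^ 2) := by gcongr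
      _ = q * S ^ 2 / 2 * (n : ℝ)⁻¹ := by field_simp
      _ ≤ q * S ^ 2 / 2 * (2 * ((n + 1 : ℕ) : ℝ)⁻¹) := by gcongr
      _ = _ := by ring
  set D : Set ℝ := { E : ℝ | ∃ v : ℕ → ℝ, ∑ j ∈ Finset.range n, v j = A - y ∧
      E = (A - y) * σ + A * (∑ j ∈ Finset.range n, h (j + 2)) +
        ∑ j ∈ Finset.range n, (Wf (A + v j) - Wf A - σ * v j + h (j + 2) * v j) } with hD
  have hmem : (A - y) * σ + A * (∑ j ∈ Finset.range n, h (j + 2)) +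
      ∑ j ∈ Finset.range n, e j (w j + t) ∈ D := by
    refine ⟨fun j => w j + t, ?_, rfl⟩
    rw [Finset.sum_add_distrib, Finset.sum_const, Finset.card_range, nsmul_eq_mul, ht]
    field_simp
    ring
  have hlb : ∀ E ∈ D, (A - y) * σ + A * (∑ j ∈ Finset.range n, h (j + 2)) +
      ∑ j ∈ Finset.range n, e j (w j) ≤ E := by
    rintro _ ⟨v, -, rfl⟩
    have := Finset.sum_le_sum fun j (_ : j ∈ Finset.range n) => hmin j (v j)
    simp only [he] at this ⊢
    linarith
  have hL := le_csInf ⟨_, hmem⟩ hlb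
  have hU := csInf_le ⟨_, hlb⟩ hmem
  have hU2 : ∑ j ∈ Finset.range n, e j (w j + t) ≤
      ∑ j ∈ Finset.range n, e j (w j) + n * (q / 2 * t ^ 2) := by
    refine (Finset.sum_le_sum fun j _ => (hwt j t).2).trans (le_of_eq ?_)
    rw [Finset.sum_add_distrib, Finset.sum_const, Finset.card_range, nsmul_eq_mul]
  rw [hsplit, hφsplit]
  have hAT := abs_le.1 (abs_mul A T).le
  have hinv : 0 ≤ ((n + 1 : ℕ) : ℝ)⁻¹ := by positivity
  have hAT0 : 0 ≤ |A| * |T| := by positivity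
  have hp2 : 0 ≤ 1 / (2 * p) := by positivity
  have hqS : 0 ≤ q * S ^ 2 := by positivity
  set I := ((n + 1 : ℕ) : ℝ)⁻¹
  -- the cross terms of the product on the right-hand side are all nonnegative
  have hbig : |A| * |T| + q * S ^ 2 * I + 1 / (2 * p) * Q ≤
      (1 + q * S ^ 2 + 1 / (2 * p)) * (I + |A| * |T| + Q) := by
    have a1 := mul_nonneg hqS hAT0
    have a2 := mul_nonneg hqS hQ0
    have a3 := mul_nonneg hp2 hAT0
    have a4 := mul_nonneg hp2 hinv
    nlinarith
  refine le_trans ?_ hbig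
  have hqI := mul_nonneg hqS hinv
  have hpQ := mul_nonneg hp2 hQ0
  rw [abs_le]
  constructor <;> linarith [hAT.1, hAT.2]

/-- limit of the coarse-grained energy with external forces, with rate. -/
theorem coarse_grained_energy_limit_with_forces
    (ψ : ℝ → ℝ) (κ₁ κ₂ : ℝ)
    (hψ : ContDiff ℝ 2 ψ) (hκ₁ : 0 < κ₁) (hκ : κ₁ ≤ κ₂)
    (hψ'' : ∀ y : ℝ, κ₁ ≤ deriv (deriv ψ) y ∧ deriv (deriv ψ) y ≤ κ₂)
    (h : ℕ → ℝ) (hh : Summable fun i => |h i|)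
    (A y : ℝ) :
    Tendsto (fun N : ℕ => EcgNF (W ψ) h N A y) atTop
      (nhds ((A - y) * deriv (W ψ) A + A * (∑' i : ℕ, h (i + 2)) +
        infJinf (W ψ) h A)) ∧
    ∃ C > 0, ∀ N : ℕ, 2 ≤ N →
      |EcgNF (W ψ) h N A y -
        ((A - y) * deriv (W ψ) A + A * (∑' i : ℕ, h (i + 2)) + infJinf (W ψ) h A)| ≤
      C * ((N : ℝ)⁻¹ + |A| * |∑' i : ℕ, h (i + N + 1)| + ∑' i : ℕ, (h (i + N + 1)) ^ 2) := by
  obtain ⟨m, hm, hW⟩ := W_quadratic hψ hκ₁ hκ (fun z => (hψ'' z).1) fun z => (hψ'' z).2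
  have hrate := rate_of_quadratic hκ₁ (hκ₁.le.trans hκ) hm hW hh A y
  refine ⟨?_, hrate⟩
  obtain ⟨C, -, hC⟩ := hrate
  have h1 : Tendsto (fun N : ℕ => ∑' i : ℕ, h (i + N + 1)) atTop (nhds 0) := by
    simpa [add_assoc] using (tendsto_add_atTop_iff_nat 1).2 (tendsto_sum_nat_add h)
  have h2 : Tendsto (fun N : ℕ => ∑' i : ℕ, h (i + N + 1) ^ 2) atTop (nhds 0) := by
    simpa [add_assoc] using (tendsto_add_atTop_iff_nat 1).2 (tendsto_sum_nat_add fun i => h i ^ 2)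
  have h3 : Tendsto (fun N : ℕ => C * ((N : ℝ)⁻¹ + |A| * |∑' i : ℕ, h (i + N + 1)| +
      ∑' i : ℕ, (h (i + N + 1)) ^ 2)) atTop (nhds 0) := by
    simpa using ((tendsto_inv_atTop_nhds_zero_nat.add (h1.abs.const_mul |A|)).add h2).const_mul C
  rw [tendsto_iff_norm_sub_tendsto_zero]
  refine squeeze_zero' (Eventually.of_forall fun N => norm_nonneg _) ?_ h3
  filter_upwards [eventually_ge_atTop 2] with N hN
  exact hC N hN
end
end

section
/- There exists a constant C > 0 such that for every integer N ≥ 2, any solution σ_N of the equation A = (1/N)·( Ψ_P(σ_N − h₁) + ∑_{i=2}^N Ψ(σ_N − h_i) ) satisfies |σ_N − σ₀| ≤ C/N, where σ₀ is the unique solution of A = Ψ(σ₀). -/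
/-!
`Psi f σ` is the mean of the probability density proportional to `exp (-f y + σ y)`.  If
`a ≤ f'' ≤ b`, then `t / b ≤ Psi f (σ + t) - Psi f σ ≤ t / a` for `t ≥ 0`: translating the
density at `σ` by `s` and dividing by the density at `σ + t` gives, at the point `y + s`,
`exp (f (y + s) - f y - t y)` up to a constant, which is increasing for `s = t / a` and
decreasing for `s = t / b`, and a monotone density ratio orders the means
(`integral_nonneg_of_monotone_ratio`).  No differentiation under the integral is needed.

Write `Ψ = Psi ψ` and `Ψ_P = Psi (ψ + P)`.  Subtracting `N Ψ(σ₀)` from the equation for `σ_N`,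
`∑_{i=2}^N (Ψ(σ_N) - Ψ(σ₀)) = Ψ(σ₀) - Ψ_P(σ_N - h₁) + ∑_{i=2}^N (Ψ(σ_N) - Ψ(σ_N - h_i))`.
The left side has the sign of `σ_N - σ₀` and size at least `(N - 1) |σ_N - σ₀| / κ₂`.  The last
sum is at most `∑ |h_i| / κ₁`, and since `Ψ_P` is increasing, `Ψ_P(σ_N - h₁)` may be replaced by
`Ψ_P(σ₀ - h₁)` in the relevant direction.  Hence `(N - 1) |σ_N - σ₀|` is bounded.
-/

noncomputable section

open MeasureTheory Real

/-- `Ψ(σ) = (∫ y exp(-f(y)+σy) dy) / (∫ exp(-f(y)+σy) dy)`. -/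
def Psi (f : ℝ → ℝ) (σ : ℝ) : ℝ :=
  (∫ y : ℝ, y * Real.exp (-f y + σ * y)) / (∫ y : ℝ, Real.exp (-f y + σ * y))

/-- If `m` is the barycentre of `g₂ ≥ 0` and `g₁ = r g₂` with `r` monotone, then `g₁` has
nonnegative first moment about `m`: integrate `(y - m) (r y - r m) g₂ y ≥ 0`.  No sign of `r` is
assumed, so antitone ratios are covered by passing to `-r`. -/
lemma integral_nonneg_of_monotone_ratio {g₁ g₂ r : ℝ → ℝ} {m : ℝ} (hr : Monotone r)
    (hg₂ : ∀ y, 0 ≤ g₂ y) (hg : ∀ y, g₁ y = r y * g₂ y)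
    (h₁ : Integrable fun y => (y - m) * g₁ y) (h₂ : Integrable fun y => (y - m) * g₂ y)
    (hm : ∫ y, (y - m) * g₂ y = 0) : 0 ≤ ∫ y, (y - m) * g₁ y := by
  have key : ∫ y, ((y - m) * g₁ y - r m * ((y - m) * g₂ y)) = ∫ y, (y - m) * g₁ y := by
    rw [integral_sub h₁ (h₂.const_mul _), integral_const_mul, hm]
    ring
  rw [← key]
  refine integral_nonneg fun y => ?_
  have e : (y - m) * g₁ y - r m * ((y - m) * g₂ y) = ((y - m) * (r y - r m)) * g₂ y := by
    rw [hg]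
    ring
  simp only [Pi.zero_apply, e]
  refine mul_nonneg ?_ (hg₂ y)
  rcases le_total m y with hy | hy
  · exact mul_nonneg (sub_nonneg.2 hy) (sub_nonneg.2 (hr hy))
  · exact mul_nonneg_of_nonpos_of_nonpos (sub_nonpos.2 hy) (sub_nonpos.2 (hr hy))

/-- Quadratic lower bound, obtained from the tangent line at `0` of the convex function
`f y - a y² / 2`. -/
lemma tangent_quadratic_le {f : ℝ → ℝ} {a : ℝ} (hf : ContDiff ℝ 2 f)
    (ha : ∀ y, a ≤ deriv (deriv f) y) (y : ℝ) :
    f 0 + deriv f 0 * y + a / 2 * y ^ 2 ≤ f y := by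
  have hd : Differentiable ℝ f := hf.differentiable (by norm_num)
  have hd' : Differentiable ℝ (deriv f) :=
    (hf.iterate_deriv' 1 1).differentiable (by norm_num)
  have h1 : ∀ x, HasDerivAt (fun x => f x - a / 2 * x ^ 2) (deriv f x - a * x) x := fun x => by
    refine ((hd x).hasDerivAt.sub ((hasDerivAt_pow 2 x).const_mul (a / 2))).congr_deriv ?_
    push_cast
    ring
  have h2 : ∀ x, HasDerivAt (fun x => deriv f x - a * x) (deriv (deriv f) x - a) x := fun x => by
    refine ((hd' x).hasDerivAt.sub ((hasDerivAt_id x).const_mul a)).congr_deriv ?_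
    ring
  have hmono : Monotone (fun x => deriv f x - a * x) :=
    monotone_of_deriv_nonneg (fun x => (h2 x).differentiableAt) fun x => by
      rw [(h2 x).deriv]
      linarith [ha x]
  have hderiv : deriv (fun x => f x - a / 2 * x ^ 2) = fun x => deriv f x - a * x :=
    funext fun x => (h1 x).deriv
  have hconv : ConvexOn ℝ Set.univ (fun x => f x - a / 2 * x ^ 2) :=
    Monotone.convexOn_univ_of_deriv (fun x => (h1 x).differentiableAt) (by rwa [hderiv])
  rcases lt_trichotomy y 0 with hy | hy | hy
  · have := hconv.slope_le_of_hasDerivAt (Set.mem_univ y) (Set.mem_univ 0) hy (h1 0)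
    rw [slope_def_field, div_le_iff₀ (by linarith)] at this
    nlinarith
  · simp [hy]
  · have := hconv.le_slope_of_hasDerivAt (Set.mem_univ 0) (Set.mem_univ y) hy (h1 0)
    rw [slope_def_field, le_div_iff₀ (by linarith)] at this
    nlinarith

lemma weight_le_gaussian {f : ℝ → ℝ} {a : ℝ} (hf : ContDiff ℝ 2 f) (ha0 : 0 < a)
    (ha : ∀ y, a ≤ deriv (deriv f) y) (σ : ℝ) :
    ∃ K, ∀ y, exp (-f y + σ * y) ≤ K * exp (-(a / 4) * y ^ 2) := by
  refine ⟨exp (-f 0 + (σ - deriv f 0) ^ 2 / a), fun y => ?_⟩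
  rw [← exp_add, exp_le_exp]
  have h := tangent_quadratic_le hf ha y
  -- Young's inequality `c y ≤ c² / a + a y² / 4`, with `c = σ - f' 0`
  have e : (σ - deriv f 0) ^ 2 / a + a / 4 * y ^ 2 - (σ - deriv f 0) * y
      = ((σ - deriv f 0) - a / 2 * y) ^ 2 / a := by
    field_simp
    ring
  have : 0 ≤ ((σ - deriv f 0) - a / 2 * y) ^ 2 / a := by positivity
  nlinarith

lemma integrable_weight {f : ℝ → ℝ} {a : ℝ} (hf : ContDiff ℝ 2 f) (ha0 : 0 < a)
    (ha : ∀ y, a ≤ deriv (deriv f) y) (σ : ℝ) :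
    Integrable fun y => exp (-f y + σ * y) := by
  obtain ⟨K, hK⟩ := weight_le_gaussian hf ha0 ha σ
  have hc : Continuous f := hf.continuous
  refine ((integrable_exp_neg_mul_sq (by positivity : 0 < a / 4)).const_mul K).mono'
    (by fun_prop) (.of_forall fun y => ?_)
  rw [norm_of_nonneg (exp_pos _).le]
  exact hK y

lemma integrable_mul_weight {f : ℝ → ℝ} {a : ℝ} (hf : ContDiff ℝ 2 f) (ha0 : 0 < a)
    (ha : ∀ y, a ≤ deriv (deriv f) y) (σ : ℝ) :
    Integrable fun y => y * exp (-f y + σ * y) := by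
  obtain ⟨K, hK⟩ := weight_le_gaussian hf ha0 ha σ
  have hc : Continuous f := hf.continuous
  refine ((integrable_mul_exp_neg_mul_sq (by positivity : 0 < a / 4)).norm.const_mul K).mono'
    (by fun_prop) (.of_forall fun y => ?_)
  rw [norm_mul, norm_mul, norm_of_nonneg (exp_pos _).le, norm_of_nonneg (exp_pos _).le]
  calc ‖y‖ * exp (-f y + σ * y) ≤ ‖y‖ * (K * exp (-(a / 4) * y ^ 2)) := by
        gcongr
        exact hK y
    _ = _ := by ring

lemma integrable_sub_mul_weight {f : ℝ → ℝ} {a : ℝ} (hf : ContDiff ℝ 2 f) (ha0 : 0 < a)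
    (ha : ∀ y, a ≤ deriv (deriv f) y) (σ m : ℝ) :
    Integrable fun y => (y - m) * exp (-f y + σ * y) := by
  simp only [sub_mul]
  exact (integrable_mul_weight hf ha0 ha σ).sub ((integrable_weight hf ha0 ha σ).const_mul m)

lemma integral_sub_mul_weight {f : ℝ → ℝ} {a : ℝ} (hf : ContDiff ℝ 2 f) (ha0 : 0 < a)
    (ha : ∀ y, a ≤ deriv (deriv f) y) (σ m : ℝ) :
    ∫ y, (y - m) * exp (-f y + σ * y) = (Psi f σ - m) * ∫ y, exp (-f y + σ * y) := by
  have hpos : 0 < ∫ y, exp (-f y + σ * y) :=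
    integral_exp_pos (integrable_weight hf ha0 ha σ)
  simp only [sub_mul]
  rw [integral_sub (integrable_mul_weight hf ha0 ha σ)
    ((integrable_weight hf ha0 ha σ).const_mul m), integral_const_mul, Psi,
    div_mul_cancel₀ _ hpos.ne']

/-- Comparison of `Psi f σ` translated by `s` with `Psi f (σ + t)`.  The sign `ε` selects between
an increasing (`ε = 1`) and a decreasing (`ε = -1`) density ratio. -/
lemma psi_compare {f : ℝ → ℝ} {a : ℝ} (hf : ContDiff ℝ 2 f) (ha0 : 0 < a)
    (ha : ∀ y, a ≤ deriv (deriv f) y) (σ s t ε : ℝ)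
    (hr : Monotone fun y => ε * exp (f (y + s) - f y - t * y)) :
    0 ≤ ε * (Psi f σ + s - Psi f (σ + t)) := by
  set m := Psi f (σ + t) - s with hm
  have hpos : 0 < ∫ y, exp (-f y + σ * y) :=
    integral_exp_pos (integrable_weight hf ha0 ha σ)
  have hshift : (fun y => (y - m) * exp (-f (y + s) + (σ + t) * (y + s)))
      = fun y => (fun z => (z - Psi f (σ + t)) * exp (-f z + (σ + t) * z)) (y + s) := by
    funext y
    simp only [hm]
    ring_nf
  have key := integral_nonneg_of_monotone_ratio (m := m)
    (g₁ := fun y => ε * exp (-f y + σ * y))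
    (g₂ := fun y => exp (-f (y + s) + (σ + t) * (y + s)))
    (r := fun y => exp (-((σ + t) * s)) * (ε * exp (f (y + s) - f y - t * y)))
    (hr.const_mul (exp_pos _).le) (fun y => (exp_pos _).le) ?_ ?_ ?_ ?_
  · simp only [mul_left_comm _ ε] at key
    rw [integral_const_mul, integral_sub_mul_weight hf ha0 ha, ← mul_assoc] at key
    have := nonneg_of_mul_nonneg_left key hpos
    rw [hm] at this
    linarith
  · intro y
    rw [mul_comm ε, mul_comm ε, ← mul_assoc, mul_assoc, mul_comm ε, ← mul_assoc, ← exp_add,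
      ← exp_add]
    ring_nf
  · simp only [mul_left_comm _ ε]
    exact (integrable_sub_mul_weight hf ha0 ha σ m).const_mul ε
  · rw [hshift]
    exact (integrable_sub_mul_weight hf ha0 ha (σ + t) (Psi f (σ + t))).comp_add_right s
  · rw [hshift, integral_add_right_eq_self
      (fun z => (z - Psi f (σ + t)) * exp (-f z + (σ + t) * z)) s,
      integral_sub_mul_weight hf ha0 ha]
    simp

lemma hasDerivAt_log_ratio {f : ℝ → ℝ} (hf : ContDiff ℝ 2 f) (s t y : ℝ) :
    HasDerivAt (fun y => f (y + s) - f y - t * y) (deriv f (y + s) - deriv f y - t) y := by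
  have hd : Differentiable ℝ f := hf.differentiable (by norm_num)
  refine ((((hd (y + s)).hasDerivAt.comp_add_const y s).sub (hd y).hasDerivAt).sub
    ((hasDerivAt_id y).const_mul t)).congr_deriv ?_
  ring

lemma psi_add_le {f : ℝ → ℝ} {a : ℝ} (hf : ContDiff ℝ 2 f) (ha0 : 0 < a)
    (ha : ∀ y, a ≤ deriv (deriv f) y) (σ : ℝ) {t : ℝ} (ht : 0 ≤ t) :
    Psi f (σ + t) ≤ Psi f σ + t / a := by
  have hd' : Differentiable ℝ (deriv f) :=
    (hf.iterate_deriv' 1 1).differentiable (by norm_num)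
  have hmono : Monotone fun y => f (y + t / a) - f y - t * y :=
    monotone_of_deriv_nonneg
      (fun y => (hasDerivAt_log_ratio hf (t / a) t y).differentiableAt) fun y => by
      rw [(hasDerivAt_log_ratio hf (t / a) t y).deriv]
      have hs : 0 ≤ t / a := by positivity
      have := mul_sub_le_image_sub_of_le_deriv hd' ha (x := y) (y := y + t / a) (by linarith)
      rw [add_sub_cancel_left, mul_div_cancel₀ _ ha0.ne'] at this
      linarith
  have := psi_compare hf ha0 ha σ (t / a) t 1 (by
    simpa [Function.comp_def] using exp_monotone.comp hmono)
  linarith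

lemma le_psi_add {f : ℝ → ℝ} {a b : ℝ} (hf : ContDiff ℝ 2 f) (ha0 : 0 < a) (hab : a ≤ b)
    (ha : ∀ y, a ≤ deriv (deriv f) y ∧ deriv (deriv f) y ≤ b) (σ : ℝ) {t : ℝ} (ht : 0 ≤ t) :
    Psi f σ + t / b ≤ Psi f (σ + t) := by
  have hb0 : 0 < b := ha0.trans_le hab
  have hd' : Differentiable ℝ (deriv f) :=
    (hf.iterate_deriv' 1 1).differentiable (by norm_num)
  have hanti : Antitone fun y => f (y + t / b) - f y - t * y :=
    antitone_of_deriv_nonpos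
      (fun y => (hasDerivAt_log_ratio hf (t / b) t y).differentiableAt) fun y => by
      rw [(hasDerivAt_log_ratio hf (t / b) t y).deriv]
      have hs : 0 ≤ t / b := by positivity
      have := image_sub_le_mul_sub_of_deriv_le hd' (fun y => (ha y).2) (x := y) (y := y + t / b)
        (by linarith)
      rw [add_sub_cancel_left, mul_div_cancel₀ _ hb0.ne'] at this
      linarith
  have := psi_compare hf ha0 (fun y => (ha y).1) σ (t / b) t (-1) fun x y hxy => by
    have := exp_le_exp.2 (hanti hxy)
    simp only [neg_mul, one_mul, neg_le_neg_iff]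
    exact this
  linarith

lemma abs_psi_sub_le {f : ℝ → ℝ} {a b : ℝ} (hf : ContDiff ℝ 2 f) (ha0 : 0 < a)
    (hab : a ≤ b) (ha : ∀ y, a ≤ deriv (deriv f) y ∧ deriv (deriv f) y ≤ b) (σ x : ℝ) :
    |Psi f σ - Psi f (σ - x)| ≤ |x| / a := by
  have hb0 : 0 < b := ha0.trans_le hab
  rcases le_total 0 x with hx | hx
  · have h1 := psi_add_le hf ha0 (fun y => (ha y).1) (σ - x) hx
    have h2 := le_psi_add hf ha0 hab ha (σ - x) hx
    have h3 : 0 ≤ x / b := by positivity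
    rw [sub_add_cancel] at h1 h2
    rw [abs_of_nonneg hx, abs_of_nonneg (by linarith)]
    linarith
  · have hx' : 0 ≤ -x := by linarith
    have h1 := psi_add_le hf ha0 (fun y => (ha y).1) σ hx'
    have h2 := le_psi_add hf ha0 hab ha σ hx'
    have h3 : 0 ≤ -x / b := by positivity
    rw [← sub_eq_add_neg] at h1 h2
    rw [abs_of_nonpos hx, abs_of_nonpos (by linarith)]
    linarith

/-- any solution `σ_N` of
`A = (1/N)(Ψ_P(σ_N - h₁) + ∑_{i=2}^N Ψ(σ_N - h_i))` satisfies `|σ_N - σ₀| ≤ C/N`,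
where `σ₀` is the unique solution of `A = Ψ(σ₀)`. -/
theorem maximizer_closeness_with_forces
    (ψ P : ℝ → ℝ) (κ₁ κ₂ ς₁ ς₂ : ℝ)
    (hψ : ContDiff ℝ 2 ψ) (hP : ContDiff ℝ 2 P)
    (hκ₁ : 0 < κ₁) (hκ : κ₁ ≤ κ₂) (hς₁ : 0 < ς₁) (hς : ς₁ ≤ ς₂)
    (hψ'' : ∀ y : ℝ, κ₁ ≤ deriv (deriv ψ) y ∧ deriv (deriv ψ) y ≤ κ₂)
    (hψP'' : ∀ y : ℝ, ς₁ ≤ deriv (deriv (fun z => ψ z + P z)) y ∧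
        deriv (deriv (fun z => ψ z + P z)) y ≤ ς₂)
    (h : ℕ → ℝ) (hh : Summable fun i => |h i|)
    (A σ₀ : ℝ) (hσ₀ : A = Psi ψ σ₀)
    (hσ₀uniq : ∀ σ : ℝ, A = Psi ψ σ → σ = σ₀) :
    ∃ C > 0, ∀ N : ℕ, 2 ≤ N → ∀ σN : ℝ,
      A = (N : ℝ)⁻¹ * (Psi (fun z => ψ z + P z) (σN - h 1) +
        ∑ i ∈ Finset.Icc 2 N, Psi ψ (σN - h i)) →
      |σN - σ₀| ≤ C / N := by
  have hκ₂ : 0 < κ₂ := hκ₁.trans_le hκ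
  have hς₂ : 0 < ς₂ := hς₁.trans_le hς
  set S := ∑' i, |h i| with hS
  have hS0 : 0 ≤ S := tsum_nonneg fun i => abs_nonneg _
  set B := |Psi ψ σ₀ - Psi (fun z => ψ z + P z) (σ₀ - h 1)| + S / κ₁ with hB
  have hB0 : 0 ≤ B := by positivity
  -- `(N - 1) |σ_N - σ₀| ≤ κ₂ B`, and `N ≤ 2 (N - 1)`; the `+ 1` makes `C` positive
  refine ⟨2 * κ₂ * B + 1, by positivity, fun N hN σN hσN => ?_⟩
  have hN2 : (2 : ℝ) ≤ N := by exact_mod_cast hN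
  have hcard : ((Finset.Icc 2 N).card : ℝ) = N - 1 := by
    rw [Nat.card_Icc, Nat.cast_sub (by omega)]
    push_cast
    ring
  have herr : |∑ i ∈ Finset.Icc 2 N, (Psi ψ σN - Psi ψ (σN - h i))| ≤ S / κ₁ := by
    refine (Finset.abs_sum_le_sum_abs _ _).trans ?_
    calc ∑ i ∈ Finset.Icc 2 N, |Psi ψ σN - Psi ψ (σN - h i)|
        ≤ ∑ i ∈ Finset.Icc 2 N, |h i| / κ₁ :=
          Finset.sum_le_sum fun i _ => abs_psi_sub_le hψ hκ₁ hκ hψ'' σN (h i)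
      _ = (∑ i ∈ Finset.Icc 2 N, |h i|) / κ₁ := (Finset.sum_div _ _ _).symm
      _ ≤ S / κ₁ := by
          gcongr
          exact hh.sum_le_tsum _ fun i _ => abs_nonneg _
  rw [Finset.sum_sub_distrib, Finset.sum_const, nsmul_eq_mul, hcard] at herr
  have heq : (N : ℝ) * Psi ψ σ₀ = Psi (fun z => ψ z + P z) (σN - h 1) +
      ∑ i ∈ Finset.Icc 2 N, Psi ψ (σN - h i) := by
    rw [← hσ₀, hσN, mul_inv_cancel_left₀ (by positivity)]
  obtain ⟨e1, e2⟩ := abs_le.1 herr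
  have hPD : ContDiff ℝ 2 (fun z => ψ z + P z) := hψ.add hP
  have fin : ∀ d : ℝ, 0 ≤ d → (N - 1 : ℝ) * (d / κ₂) ≤ B → d ≤ (2 * κ₂ * B + 1) / N := by
    intro d hd hle
    rw [le_div_iff₀ (by positivity)]
    have h1 : (N - 1 : ℝ) * d ≤ B * κ₂ := by
      rwa [← mul_div_assoc, div_le_iff₀ hκ₂] at hle
    nlinarith
  rcases le_total σ₀ σN with hle | hle
  · have hd : 0 ≤ σN - σ₀ := by linarith
    rw [abs_of_nonneg hd]
    refine fin _ hd ?_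
    have l1 := le_psi_add hψ hκ₁ hκ hψ'' σ₀ hd
    have l2 := le_psi_add hPD hς₁ hς hψP'' (σ₀ - h 1) hd
    have l3 : 0 ≤ (σN - σ₀) / ς₂ := by positivity
    rw [show σ₀ + (σN - σ₀) = σN by ring] at l1
    rw [show σ₀ - h 1 + (σN - σ₀) = σN - h 1 by ring] at l2
    have l4 := mul_le_mul_of_nonneg_left l1 (by linarith : (0 : ℝ) ≤ N - 1)
    have l5 := le_abs_self (Psi ψ σ₀ - Psi (fun z => ψ z + P z) (σ₀ - h 1))
    linarith
  · have hd : 0 ≤ σ₀ - σN := by linarith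
    rw [abs_sub_comm, abs_of_nonneg hd]
    refine fin _ hd ?_
    have l1 := le_psi_add hψ hκ₁ hκ hψ'' σN hd
    have l2 := le_psi_add hPD hς₁ hς hψP'' (σN - h 1) hd
    have l3 : 0 ≤ (σ₀ - σN) / ς₂ := by positivity
    rw [show σN + (σ₀ - σN) = σ₀ by ring] at l1
    rw [show σN - h 1 + (σ₀ - σN) = σ₀ - h 1 by ring] at l2
    have l4 := mul_le_mul_of_nonneg_left l1 (by linarith : (0 : ℝ) ≤ N - 1)
    have l5 := neg_abs_le (Psi ψ σ₀ - Psi (fun z => ψ z + P z) (σ₀ - h 1))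
    linarith
end
end
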